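/- Let r₁ > 0, ν̄ > 0, and let f : ℝ × B[0,r₁] × [0,ν̄] → ℝⁿ be continuous, with f_ν := f(·,·,ν) RAP in t uniformly with respect to (x,ν), continuously differentiable in x with ∂f_ν/∂x continuous in x uniformly in t. Suppose the averaged function f₀(x) := lim_{T→∞} (1/(2T)) ∫_{−T}^{T} f(t,x,0) dt exists uniformly in x and under all translations in t. Assume there exists x₀ in the open ball B(0,r₁) with f₀(x₀) = 0 and such that every eigenvalue of the Jacobian matrix (∂f₀/∂x)(x₀) has nonzero real part. Then there exist r₀ > 0 and ν₀ > 0 such that for each ν ∈ (0,ν₀] the equation x' = ν·f_ν(t,x) has a unique RAP solution φ_ν satisfying sup_{t∈ℝ} ‖φ_ν(t) − x₀‖ ≤ r₀, and (t,ν) ↦ φ_ν(t) is continuous on ℝ × (0,ν₀]. -/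

import Mathlib

open MeasureTheory Filter Metric

def RelativelyDense (S : Set ℝ) : Prop :=
  ∃ l > 0, ∀ a : ℝ, ∃ τ ∈ S, τ ∈ Set.Icc a (a + l)

def RAP {E : Type*} [NormedAddCommGroup E] (f : ℝ → E) : Prop :=
  (∃ C, ∀ t, ‖f t‖ ≤ C) ∧ UniformContinuous f ∧
  ∀ ε > 0, RelativelyDense
    {τ | Filter.limsup (fun t => ‖f (t + τ) - f t‖) (Filter.cocompact ℝ) < ε}

def RAPUniform {E F : Type*} [NormedAddCommGroup E] [NormedAddCommGroup F]
    (f : ℝ → E → F) (S : Set E) : Prop :=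
  (∃ C, ∀ t, ∀ x ∈ S, ‖f t x‖ ≤ C) ∧
  UniformContinuousOn (fun p : ℝ × E => f p.1 p.2) (Set.univ ×ˢ S) ∧
  ∀ ε > 0, RelativelyDense
    {τ | Filter.limsup (fun t => ⨆ x ∈ S, ‖f (t + τ) x - f t x‖) (Filter.cocompact ℝ) < ε}

noncomputable def clmToMatrix {n : ℕ}
    (L : EuclideanSpace ℝ (Fin n) →L[ℝ] EuclideanSpace ℝ (Fin n)) :
    Matrix (Fin n) (Fin n) ℝ :=
  Matrix.toEuclideanLin.symm (L : EuclideanSpace ℝ (Fin n) →ₗ[ℝ] EuclideanSpace ℝ (Fin n))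

/-!
Subtracting the linearisation `A` of `f₀` at `x₀` turns the slow equation into
`y' = ν (A y + g(t, y))`, where `g` is nearly affine in `y` on a small ball and nearly zero on
average. The bounded solution of `w' = ν (A w + h)` moves at speed `O(ν)`, so it is close to its own
average over a window of fixed length `T`. That average solves the same equation with `h` replaced
by its window average, and for small `ν` only the average of `h` matters. Since `A` has no spectrum
on the imaginary axis, this bounds `w` in every exponentially weighted sup norm of rate `ν a`.

The constant weight gives existence, through a contraction, and uniqueness. The weights
`exp (ν a |s - t|)` show that an error in the equation is felt at time `t` only through its values
near `t`: comparing a solution with its translate by a remote almost period gives remote almost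
periodicity, and comparing solutions for two values of `ν` gives continuity.
-/

open scoped Topology NNReal

section RemotelyAlmostPeriodic

variable {E F : Type*} [NormedAddCommGroup E] [NormedAddCommGroup F]

theorem RelativelyDense.mono {S S' : Set ℝ} (h : RelativelyDense S) (hS : S ⊆ S') :
    RelativelyDense S' := by
  obtain ⟨l, hl, h⟩ := h
  refine ⟨l, hl, fun a => ?_⟩
  obtain ⟨τ, hτ, hτa⟩ := h a
  exact ⟨τ, hS hτ, hτa⟩

theorem RAP.of_eventually_norm_sub_le {x : ℝ → E} (hbdd : ∃ C, ∀ t, ‖x t‖ ≤ C)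
    (huc : UniformContinuous x)
    (h : ∀ ε > 0, RelativelyDense {τ | ∀ᶠ t in cocompact ℝ, ‖x (t + τ) - x t‖ ≤ ε}) :
    RAP x := by
  refine ⟨hbdd, huc, fun ε hε => (h (ε / 2) (half_pos hε)).mono fun τ hτ => ?_⟩
  have hcobdd : IsCoboundedUnder (· ≤ ·) (cocompact ℝ) fun t => ‖x (t + τ) - x t‖ :=
    .of_frequently_ge (.of_forall fun t => norm_nonneg _)
  exact (limsup_le_of_le hcobdd hτ).trans_lt (half_lt_self hε)

theorem RAPUniform.relativelyDense_eventually {f : ℝ → E → F} {S : Set E} (hf : RAPUniform f S)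
    {ε : ℝ} (hε : 0 < ε) :
    RelativelyDense {τ | ∀ᶠ t in cocompact ℝ, ∀ x ∈ S, ‖f (t + τ) x - f t x‖ ≤ ε} := by
  obtain ⟨⟨C, hC⟩, -, hrel⟩ := hf
  refine (hrel ε hε).mono fun τ hτ => ?_
  have hlim : limsup (fun t => ⨆ x ∈ S, ‖f (t + τ) x - f t x‖) (cocompact ℝ) < ε := hτ
  have hinner : ∀ t x, (⨆ _ : x ∈ S, ‖f (t + τ) x - f t x‖) ≤ |C| + |C| := fun t x =>
    Real.iSup_le (fun hx => norm_sub_le_of_le ((hC (t + τ) x hx).trans (le_abs_self C))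
      ((hC t x hx).trans (le_abs_self C))) (by positivity)
  have hbdd : IsBoundedUnder (· ≤ ·) (cocompact ℝ) fun t => ⨆ x ∈ S, ‖f (t + τ) x - f t x‖ :=
    isBoundedUnder_of ⟨_, fun t => Real.iSup_le (hinner t) (by positivity)⟩
  filter_upwards [eventually_lt_of_limsup_lt hlim hbdd] with t ht x hx
  have hle := le_ciSup (f := fun x => ⨆ _ : x ∈ S, ‖f (t + τ) x - f t x‖)
    ⟨_, Set.forall_mem_range.2 (hinner t)⟩ x
  rw [ciSup_pos hx] at hle
  exact hle.trans ht.le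

end RemotelyAlmostPeriodic

section ExpWeight

/-- A weight for sup norms of functions on the line whose logarithm is `b`-Lipschitz. The constant
weight gives uniform estimates, and `exp (b * |s - t₀|)` gives estimates localised near `t₀`. -/
structure IsExpWeight (b : ℝ) (ω : ℝ → ℝ) : Prop where
  pos : ∀ t, 0 < ω t
  le_exp_mul : ∀ s t, ω s ≤ Real.exp (b * |s - t|) * ω t

namespace IsExpWeight

variable {b : ℝ} {ω : ℝ → ℝ}

theorem one (hb : 0 ≤ b) : IsExpWeight b fun _ => 1 where
  pos _ := one_pos
  le_exp_mul s t := by simpa using mul_nonneg hb (abs_nonneg (s - t))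

theorem exp_abs_sub (hb : 0 ≤ b) (t₀ : ℝ) : IsExpWeight b fun s => Real.exp (b * |s - t₀|) where
  pos _ := Real.exp_pos _
  le_exp_mul s t := by
    rw [← Real.exp_add, ← mul_add]
    gcongr
    exact abs_sub_le s t t₀

theorem comp_mul (hω : IsExpWeight b ω) (μ : ℝ) : IsExpWeight (b * |μ|) fun t => ω (μ * t) where
  pos _ := hω.pos _
  le_exp_mul s t := by
    simpa only [mul_assoc, ← abs_mul, mul_sub] using hω.le_exp_mul (μ * s) (μ * t)

theorem le_of_mem_window (hω : IsExpWeight b ω) (hb : 0 ≤ b) {T s t : ℝ}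
    (hs : s ∈ Set.Icc t (t + T)) : ω s ≤ Real.exp (b * T) * ω t := by
  refine (hω.le_exp_mul s t).trans ?_
  have hst : |s - t| ≤ T := abs_le.2 ⟨by linarith [hs.1, hs.2], by linarith [hs.2]⟩
  gcongr
  exact (hω.pos t).le

end IsExpWeight

theorem eventually_forall_le_mul_exp_abs_sub {u : ℝ → ℝ} {K η b : ℝ} (hb : 0 < b) (hη : 0 < η)
    (hK : ∀ t, u t ≤ K) (hu : ∀ᶠ t in cocompact ℝ, u t ≤ η) :
    ∀ᶠ t in cocompact ℝ, ∀ s, u s ≤ η * Real.exp (b * |s - t|) := by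
  have hexp : Tendsto (fun R => η * Real.exp (b * R)) atTop atTop :=
    (Real.tendsto_exp_atTop.comp (tendsto_id.const_mul_atTop hb)).const_mul_atTop hη
  obtain ⟨R, hR⟩ := (hexp.eventually_ge_atTop K).exists
  rw [← cobounded_eq_cocompact] at hu ⊢
  obtain ⟨ρ, -, hρ⟩ := (hasBasis_cobounded_norm.eventually_iff).1 hu
  refine hasBasis_cobounded_norm.eventually_iff.2 ⟨ρ + R, trivial, fun t ht s => ?_⟩
  rcases le_total |s - t| R with hst | hst
  · have hs : ρ ≤ ‖s‖ := by
      have := abs_sub_abs_le_abs_sub t s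
      rw [abs_sub_comm] at this
      simp only [Set.mem_ofPred_eq, Real.norm_eq_abs] at ht ⊢
      linarith
    exact (hρ hs).trans (le_mul_of_one_le_right hη.le (Real.one_le_exp (by positivity)))
  · calc u s ≤ η * Real.exp (b * R) := (hK s).trans hR
      _ ≤ η * Real.exp (b * |s - t|) := by gcongr

end ExpWeight

section WindowAverage

variable {E : Type*} [NormedAddCommGroup E] [NormedSpace ℝ E] {T : ℝ} {z z₁ z₂ : ℝ → E}

/-- The forward moving average of `z` over a time window of length `T`. -/
noncomputable def windowAvg (T : ℝ) (z : ℝ → E) (t : ℝ) : E :=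
  T⁻¹ • ∫ s in t..t + T, z s

theorem windowAvg_const (hT : T ≠ 0) (v : E) [CompleteSpace E] (t : ℝ) :
    windowAvg T (fun _ => v) t = v := by
  simp [windowAvg, smul_smul, hT]

theorem windowAvg_add (h₁ : Continuous z₁) (h₂ : Continuous z₂) (t : ℝ) :
    windowAvg T (fun s => z₁ s + z₂ s) t = windowAvg T z₁ t + windowAvg T z₂ t := by
  simp only [windowAvg, ← smul_add,
    intervalIntegral.integral_add (h₁.intervalIntegrable _ _) (h₂.intervalIntegrable _ _)]

theorem windowAvg_sub (h₁ : Continuous z₁) (h₂ : Continuous z₂) (t : ℝ) :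
    windowAvg T (fun s => z₁ s - z₂ s) t = windowAvg T z₁ t - windowAvg T z₂ t := by
  simp only [windowAvg, ← smul_sub,
    intervalIntegral.integral_sub (h₁.intervalIntegrable _ _) (h₂.intervalIntegrable _ _)]

theorem windowAvg_smul (c : ℝ) (z : ℝ → E) (t : ℝ) :
    windowAvg T (fun s => c • z s) t = c • windowAvg T z t := by
  rw [windowAvg, intervalIntegral.integral_smul, smul_comm, windowAvg]

theorem norm_windowAvg_le (hT : 0 < T) {K t : ℝ} (hK : ∀ s ∈ Set.Icc t (t + T), ‖z s‖ ≤ K) :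
    ‖windowAvg T z t‖ ≤ K := by
  have hint : ‖∫ s in t..t + T, z s‖ ≤ K * |t + T - t| :=
    intervalIntegral.norm_integral_le_of_norm_le_const fun s hs =>
      hK s (Set.Ioc_subset_Icc_self (by rwa [Set.uIoc_of_le (by linarith)] at hs))
  rw [add_sub_cancel_left, abs_of_pos hT, mul_comm] at hint
  rwa [windowAvg, norm_smul, norm_inv, Real.norm_of_nonneg hT.le, inv_mul_le_iff₀ hT]

theorem norm_windowAvg_sub_le_of_norm_sub_le (hT : 0 < T) (h₁ : Continuous z₁)
    (h₂ : Continuous z₂) {K₁ K₂ t : ℝ} {v : E}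
    (hsub : ∀ s ∈ Set.Icc t (t + T), ‖z₁ s - z₂ s‖ ≤ K₁)
    (havg : ‖windowAvg T z₂ t - v‖ ≤ K₂) : ‖windowAvg T z₁ t - v‖ ≤ K₁ + K₂ := by
  have hdiff := norm_windowAvg_le hT hsub
  rw [windowAvg_sub h₁ h₂] at hdiff
  rw [← sub_add_sub_cancel _ (windowAvg T z₂ t)]
  exact norm_add_le_of_le hdiff havg

theorem norm_windowAvg_le_of_norm_sub_le (hT : 0 < T) (h₁ : Continuous z₁) (h₂ : Continuous z₂)
    {K₁ K₂ t : ℝ} (hsub : ∀ s ∈ Set.Icc t (t + T), ‖z₁ s - z₂ s‖ ≤ K₁)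
    (havg : ‖windowAvg T z₂ t‖ ≤ K₂) : ‖windowAvg T z₁ t‖ ≤ K₁ + K₂ := by
  rw [← sub_zero (windowAvg T _ t)] at havg ⊢
  exact norm_windowAvg_sub_le_of_norm_sub_le hT h₁ h₂ hsub havg

variable [CompleteSpace E]

theorem hasDerivAt_windowAvg (hz : Continuous z) (t : ℝ) :
    HasDerivAt (windowAvg T z) (T⁻¹ • (z (t + T) - z t)) t := by
  have hprim : ∀ t, HasDerivAt (fun t => ∫ s in (0:ℝ)..t, z s) (z t) t := fun t =>
    hz.integral_hasStrictDerivAt 0 t |>.hasDerivAt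
  have hsplit : windowAvg T z =
      fun t => T⁻¹ • ((∫ s in (0:ℝ)..t + T, z s) - ∫ s in (0:ℝ)..t, z s) := by
    funext t
    rw [windowAvg, intervalIntegral.integral_interval_sub_left (hz.intervalIntegrable _ _)
      (hz.intervalIntegrable _ _)]
  rw [hsplit]
  exact (((hprim (t + T)).comp_add_const t T).sub (hprim t)).const_smul T⁻¹

theorem continuous_windowAvg (hz : Continuous z) : Continuous (windowAvg T z) :=
  continuous_iff_continuousAt.2 fun t => (hasDerivAt_windowAvg hz t).continuousAt

theorem windowAvg_clm_comp (A : E →L[ℝ] E) (hz : Continuous z) (t : ℝ) :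
    windowAvg T (fun s => A (z s)) t = A (windowAvg T z t) := by
  rw [windowAvg, A.intervalIntegral_comp_comm (hz.intervalIntegrable _ _), windowAvg, map_smul]

end WindowAverage

section BoundedSolution

variable {E : Type*} [NormedAddCommGroup E] [NormedSpace ℝ E] {A : E →L[ℝ] E} {ν : ℝ}
  {y y₁ y₂ h h₁ h₂ : ℝ → E}

/-- `y` is a bounded solution of the linear equation `y' = ν (A y + h)` on the line, whose forcing
term `h` is continuous and bounded. -/
structure IsBddSol (A : E →L[ℝ] E) (ν : ℝ) (y h : ℝ → E) : Prop where
  hasDerivAt : ∀ t, HasDerivAt y (ν • (A (y t) + h t)) t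
  continuous_forcing : Continuous h
  bdd_forcing : ∃ K, ∀ t, ‖h t‖ ≤ K
  bdd : ∃ K, ∀ t, ‖y t‖ ≤ K

namespace IsBddSol

theorem continuous (hy : IsBddSol A ν y h) : Continuous y :=
  continuous_iff_continuousAt.2 fun t => (hy.hasDerivAt t).continuousAt

theorem add (hy₁ : IsBddSol A ν y₁ h₁) (hy₂ : IsBddSol A ν y₂ h₂) :
    IsBddSol A ν (y₁ + y₂) (h₁ + h₂) where
  hasDerivAt t := ((hy₁.hasDerivAt t).add (hy₂.hasDerivAt t)).congr_deriv <| by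
    simp only [Pi.add_apply, map_add, smul_add]
    abel
  continuous_forcing := hy₁.continuous_forcing.add hy₂.continuous_forcing
  bdd_forcing := by
    obtain ⟨⟨K₁, hK₁⟩, ⟨K₂, hK₂⟩⟩ := And.intro hy₁.bdd_forcing hy₂.bdd_forcing
    exact ⟨K₁ + K₂, fun t => norm_add_le_of_le (hK₁ t) (hK₂ t)⟩
  bdd := by
    obtain ⟨⟨K₁, hK₁⟩, ⟨K₂, hK₂⟩⟩ := And.intro hy₁.bdd hy₂.bdd
    exact ⟨K₁ + K₂, fun t => norm_add_le_of_le (hK₁ t) (hK₂ t)⟩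

theorem neg (hy : IsBddSol A ν y h) : IsBddSol A ν (-y) (-h) where
  hasDerivAt t := (hy.hasDerivAt t).neg.congr_deriv <| by
    simp only [Pi.neg_apply, map_neg, ← neg_add, smul_neg]
  continuous_forcing := hy.continuous_forcing.neg
  bdd_forcing := by simpa only [Pi.neg_apply, norm_neg] using hy.bdd_forcing
  bdd := by simpa only [Pi.neg_apply, norm_neg] using hy.bdd

theorem sub (hy₁ : IsBddSol A ν y₁ h₁) (hy₂ : IsBddSol A ν y₂ h₂) :
    IsBddSol A ν (y₁ - y₂) (h₁ - h₂) := by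
  simpa only [sub_eq_add_neg] using hy₁.add hy₂.neg

theorem comp_mul (hy : IsBddSol A ν y h) (μ : ℝ) :
    IsBddSol A (ν * μ) (fun t => y (μ * t)) (fun t => h (μ * t)) where
  hasDerivAt t := by
    have hmul : HasDerivAt (fun t => μ * t) μ t := by simpa using (hasDerivAt_id t).const_mul μ
    exact ((hy.hasDerivAt (μ * t)).scomp t hmul).congr_deriv (by rw [smul_smul, mul_comm])
  continuous_forcing := hy.continuous_forcing.comp (continuous_const_mul μ)
  bdd_forcing := hy.bdd_forcing.imp fun _ hK t => hK _
  bdd := hy.bdd.imp fun _ hK t => hK _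

theorem map {F : Type*} [NormedAddCommGroup F] [NormedSpace ℝ F] {B : F →L[ℝ] F}
    (hy : IsBddSol A ν y h) (P : E →L[ℝ] F) (hP : ∀ v, P (A v) = B (P v)) :
    IsBddSol B ν (fun t => P (y t)) (fun t => P (h t)) where
  hasDerivAt t := (P.hasFDerivAt.comp_hasDerivAt t (hy.hasDerivAt t)).congr_deriv <| by
    rw [map_smul, map_add, hP]
  continuous_forcing := P.continuous.comp hy.continuous_forcing
  bdd_forcing := let ⟨K, hK⟩ := hy.bdd_forcing; ⟨‖P‖ * K, fun t => P.le_opNorm_of_le (hK t)⟩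
  bdd := let ⟨K, hK⟩ := hy.bdd; ⟨‖P‖ * K, fun t => P.le_opNorm_of_le (hK t)⟩

protected theorem windowAvg [CompleteSpace E] {T : ℝ} (hT : 0 < T) (hy : IsBddSol A ν y h) :
    IsBddSol A ν (windowAvg T y) (windowAvg T h) where
  hasDerivAt t := (hasDerivAt_windowAvg hy.continuous t).congr_deriv <| by
    have hforced : Continuous fun s => A (y s) + h s :=
      (A.continuous.comp hy.continuous).add hy.continuous_forcing
    rw [← intervalIntegral.integral_eq_sub_of_hasDerivAt (fun s _ => hy.hasDerivAt s)
      ((hforced.const_smul ν).intervalIntegrable _ _), intervalIntegral.integral_smul, smul_comm,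
      ← windowAvg_clm_comp A hy.continuous,
      ← windowAvg_add (z₁ := fun s => A (y s)) (A.continuous.comp hy.continuous)
        hy.continuous_forcing, _root_.windowAvg]
  continuous_forcing := continuous_windowAvg hy.continuous_forcing
  bdd_forcing := hy.bdd_forcing.imp fun _ hK t => norm_windowAvg_le hT fun s _ => hK s
  bdd := hy.bdd.imp fun _ hK t => norm_windowAvg_le hT fun s _ => hK s

theorem norm_sub_le_of_mem_window (hy : IsBddSol A ν y h) (hν : 0 ≤ ν) {b T p q : ℝ} (hb : 0 ≤ b)
    (hp : 0 ≤ p) (hq : 0 ≤ q) {ω : ℝ → ℝ} (hω : IsExpWeight b ω) (hyω : ∀ s, ‖y s‖ ≤ p * ω s)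
    (hhω : ∀ s, ‖h s‖ ≤ q * ω s) {s t : ℝ} (hs : s ∈ Set.Icc t (t + T)) :
    ‖y s - y t‖ ≤ ν * T * Real.exp (b * T) * (‖A‖ * p + q) * ω t := by
  have hderiv : ∀ x ∈ Set.Ico t (t + T),
      ‖ν • (A (y x) + h x)‖ ≤ ν * ((‖A‖ * p + q) * (Real.exp (b * T) * ω t)) := fun x hx => by
    have hωx := hω.le_of_mem_window hb (Set.Ico_subset_Icc_self hx)
    calc ‖ν • (A (y x) + h x)‖ ≤ ν * (‖A‖ * (p * ω x) + q * ω x) := by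
          rw [norm_smul, Real.norm_of_nonneg hν]
          gcongr
          exact norm_add_le_of_le (A.le_opNorm_of_le (hyω x)) (hhω x)
      _ = ν * ((‖A‖ * p + q) * ω x) := by ring
      _ ≤ _ := by gcongr
  have hωt := (hω.pos t).le
  calc ‖y s - y t‖ ≤ ν * ((‖A‖ * p + q) * (Real.exp (b * T) * ω t)) * (s - t) :=
        norm_image_sub_le_of_norm_deriv_le_segment'
          (fun x _ => (hy.hasDerivAt x).hasDerivWithinAt) hderiv s hs
    _ ≤ ν * ((‖A‖ * p + q) * (Real.exp (b * T) * ω t)) * T := by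
        gcongr
        linarith [hs.2]
    _ = ν * T * Real.exp (b * T) * (‖A‖ * p + q) * ω t := by ring

end IsBddSol

/-- The equation `y' = A y + h` has exactly one bounded solution for every bounded continuous
forcing term, and its Green operator has norm at most `M` in every exponentially weighted sup norm
of rate at most `a`. -/
structure HasGreenBound (A : E →L[ℝ] E) (a M : ℝ) : Prop where
  rate_pos : 0 < a
  const_nonneg : 0 ≤ M
  exists_sol : ∀ h : ℝ → E, Continuous h → (∃ K, ∀ t, ‖h t‖ ≤ K) → ∃ y, IsBddSol A 1 y h ∧
    ∀ ω c, IsExpWeight a ω → (∀ s, ‖h s‖ ≤ c * ω s) → ∀ t, ‖y t‖ ≤ M * c * ω t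
  eq_zero : ∀ y, IsBddSol A 1 y 0 → y = 0

namespace HasGreenBound

variable {a M : ℝ}

theorem eq_of_isBddSol (hA : HasGreenBound A a M) (hy₁ : IsBddSol A 1 y₁ h)
    (hy₂ : IsBddSol A 1 y₂ h) : y₁ = y₂ :=
  sub_eq_zero.1 (hA.eq_zero _ (by simpa only [sub_self] using hy₁.sub hy₂))

theorem norm_le (hA : HasGreenBound A a M) (hν : 0 < ν) (hy : IsBddSol A ν y h) {ω : ℝ → ℝ} {c : ℝ}
    (hω : IsExpWeight (ν * a) ω) (hc : ∀ s, ‖h s‖ ≤ c * ω s) (t : ℝ) : ‖y t‖ ≤ M * c * ω t := by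
  have hslow := hy.comp_mul ν⁻¹
  rw [mul_inv_cancel₀ hν.ne'] at hslow
  obtain ⟨z, hz, hzω⟩ := hA.exists_sol _ hslow.continuous_forcing hslow.bdd_forcing
  have hωslow : IsExpWeight a fun t => ω (ν⁻¹ * t) := by
    have := hω.comp_mul ν⁻¹
    rwa [abs_of_pos (inv_pos.2 hν), mul_right_comm, mul_inv_cancel₀ hν.ne', one_mul] at this
  have hbound := hzω _ c hωslow (fun s => hc _) (ν * t)
  simpa only [← hA.eq_of_isBddSol hslow hz, inv_mul_cancel_left₀ hν.ne'] using hbound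

theorem exists_isBddSol (hA : HasGreenBound A a M) (hν : ν ≠ 0) (hh : Continuous h)
    (hbdd : ∃ K, ∀ t, ‖h t‖ ≤ K) : ∃ y, IsBddSol A ν y h := by
  obtain ⟨z, hz, -⟩ := hA.exists_sol (fun t => h (ν⁻¹ * t)) (hh.comp (continuous_const_mul ν⁻¹))
    (hbdd.imp fun _ hK t => hK _)
  exact ⟨_, by simpa only [one_mul, inv_mul_cancel_left₀ hν] using hz.comp_mul ν⟩

theorem neg (hA : HasGreenBound A a M) : HasGreenBound (-A) a M := by
  have hrev : ∀ {B : E →L[ℝ] E} {y h : ℝ → E}, IsBddSol B 1 y h →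
      IsBddSol (-B) 1 (fun t => y (-t)) (fun t => -h (-t)) := fun hy =>
    { hasDerivAt := fun t => ((hy.comp_mul (-1)).hasDerivAt t |> fun hd => by
        simpa [neg_one_mul, add_comm] using hd)
      continuous_forcing := (hy.continuous_forcing.comp continuous_neg).neg
      bdd_forcing := hy.bdd_forcing.imp fun _ hK t => (norm_neg _).trans_le (hK _)
      bdd := hy.bdd.imp fun _ hK t => hK _ }
  refine ⟨hA.rate_pos, hA.const_nonneg, fun h hh hbdd => ?_, fun y hy => ?_⟩
  · obtain ⟨y, hy, hyω⟩ := hA.exists_sol (fun t => -h (-t)) (hh.comp continuous_neg).neg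
      (hbdd.imp fun _ hK t => (norm_neg _).trans_le (hK _))
    refine ⟨_, by simpa only [neg_neg] using hrev hy, fun ω c hω hc t => ?_⟩
    have hωrev : IsExpWeight a fun t => ω (-t) := by simpa using hω.comp_mul (-1)
    simpa only [neg_neg] using hyω _ c hωrev (fun s => (norm_neg _).trans_le (hc _)) (-t)
  · have hzero := hA.eq_zero (fun t => y (-t)) (by simpa [Pi.zero_def] using hrev hy)
    funext t
    simpa using congrFun hzero (-t)

theorem of_retract {F : Type*} [NormedAddCommGroup F] [NormedSpace ℝ F] {B : F →L[ℝ] F}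
    (hB : HasGreenBound B a M) (ι : E →L[ℝ] F) (ρ : F →L[ℝ] E) (hρι : ∀ x, ρ (ι x) = x)
    (hι : ∀ x, ι (A x) = B (ι x)) (hρ : ∀ v, ρ (B v) = A (ρ v)) :
    HasGreenBound A a (‖ρ‖ * (M * ‖ι‖)) where
  rate_pos := hB.rate_pos
  const_nonneg := mul_nonneg (norm_nonneg _) (mul_nonneg hB.const_nonneg (norm_nonneg _))
  exists_sol h hh hbdd := by
    obtain ⟨K, hK⟩ := hbdd
    obtain ⟨y, hy, hyω⟩ := hB.exists_sol (fun t => ι (h t)) (ι.continuous.comp hh)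
      ⟨‖ι‖ * K, fun t => ι.le_opNorm_of_le (hK t)⟩
    refine ⟨fun t => ρ (y t), by simpa only [hρι] using hy.map ρ hρ, fun ω c hω hc t => ?_⟩
    have hyt := hyω ω (‖ι‖ * c) hω (fun s => (ι.le_opNorm_of_le (hc s)).trans_eq (by ring)) t
    exact (ρ.le_opNorm_of_le hyt).trans_eq (by ring)
  eq_zero y hy := by
    have hzero := hB.eq_zero _ (by simpa [Pi.zero_def] using hy.map ι hι)
    funext t
    simpa [hρι] using congrArg ρ (congrFun hzero t)

end HasGreenBound

end BoundedSolution

section LinearEquation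

variable {V : Type*} [NormedAddCommGroup V] [NormedSpace ℂ V] {lam : ℂ} {h : ℝ → V} {a : ℝ}

theorem norm_cexp_mul_ofReal (lam : ℂ) (t : ℝ) :
    ‖Complex.exp (lam * t)‖ = Real.exp (lam.re * t) := by
  rw [Complex.norm_exp, Complex.re_mul_ofReal]

theorem hasDerivAt_cexp_mul_ofReal (lam : ℂ) (t : ℝ) :
    HasDerivAt (fun t : ℝ => Complex.exp (lam * t)) (lam * Complex.exp (lam * t)) t := by
  simpa [mul_comm] using ((hasDerivAt_id t).ofReal_comp.const_mul lam).cexp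

/-- The solution of `u' = lam • u + h` that variation of constants from `-∞` produces. -/
noncomputable def duhamel (lam : ℂ) (h : ℝ → V) (t : ℝ) : V :=
  Complex.exp (lam * t) • ∫ s in Set.Iic t, Complex.exp (-lam * s) • h s

theorem hasDerivAt_duhamel [CompleteSpace V] (hlam : lam.re < 0) (hh : Continuous h)
    (hbdd : ∃ K, ∀ t, ‖h t‖ ≤ K) (t : ℝ) :
    HasDerivAt (duhamel lam h) (lam • duhamel lam h t + h t) t := by
  obtain ⟨K, hK⟩ := hbdd
  have hcont : Continuous fun s : ℝ => Complex.exp (-lam * s) • h s := by fun_prop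
  have hint : ∀ t, IntegrableOn (fun s : ℝ => Complex.exp (-lam * s) • h s) (Set.Iic t) := fun t =>
    ((integrableOn_exp_mul_Iic (neg_pos.2 hlam) t).mul_const K).mono' hcont.aestronglyMeasurable <|
      .of_forall fun s => by
        rw [norm_smul, norm_cexp_mul_ofReal, Complex.neg_re]
        gcongr
        exact hK s
  have hsplit : ∀ t : ℝ, ∫ s : ℝ in Set.Iic t, Complex.exp (-lam * s) • h s =
      (∫ s : ℝ in Set.Iic 0, Complex.exp (-lam * s) • h s) +
        ∫ s : ℝ in 0..t, Complex.exp (-lam * s) • h s := fun t => by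
    rw [← intervalIntegral.integral_Iic_sub_Iic (hint 0) (hint t), add_sub_cancel]
  have hderiv : HasDerivAt (fun t : ℝ => ∫ s in Set.Iic t, Complex.exp (-lam * s) • h s)
      (Complex.exp (-lam * t) • h t) t := by
    rw [funext hsplit]
    exact (hcont.integral_hasStrictDerivAt 0 t).hasDerivAt.const_add _
  refine ((hasDerivAt_cexp_mul_ofReal lam t).smul hderiv).congr_deriv ?_
  rw [smul_smul, ← Complex.exp_add, neg_mul, add_neg_cancel, Complex.exp_zero, one_smul, add_comm,
    mul_smul, duhamel]

theorem norm_duhamel_le (hlam : a < -lam.re) {ω : ℝ → ℝ} {c : ℝ} (hω : IsExpWeight a ω)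
    (hc : ∀ s, ‖h s‖ ≤ c * ω s) (t : ℝ) : ‖duhamel lam h t‖ ≤ (-lam.re - a)⁻¹ * c * ω t := by
  have hgap : 0 < -lam.re - a := sub_pos.2 hlam
  have hc₀ : 0 ≤ c := nonneg_of_mul_nonneg_left ((norm_nonneg _).trans (hc 0)) (hω.pos 0)
  have hbound : ∀ s ∈ Set.Iic t, ‖Complex.exp (-lam * s) • h s‖ ≤
      Real.exp ((-lam.re - a) * s) * (c * (Real.exp (a * t) * ω t)) := fun s hs => by
    have hst := hω.le_exp_mul s t
    rw [abs_of_nonpos (sub_nonpos.2 hs)] at hst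
    calc ‖Complex.exp (-lam * s) • h s‖ ≤
          Real.exp (-lam.re * s) * (c * (Real.exp (a * -(s - t)) * ω t)) := by
          rw [norm_smul, norm_cexp_mul_ofReal, Complex.neg_re]
          gcongr
          exact (hc s).trans (by gcongr)
      _ = Real.exp (-lam.re * s + a * -(s - t)) * (c * ω t) := by rw [Real.exp_add]; ring
      _ = Real.exp ((-lam.re - a) * s + a * t) * (c * ω t) := by ring_nf
      _ = _ := by rw [Real.exp_add]; ring
  have hint := norm_integral_le_of_norm_le ((integrableOn_exp_mul_Iic hgap t).mul_const _)
    (ae_restrict_of_forall_mem measurableSet_Iic hbound)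
  rw [integral_mul_const, integral_exp_mul_Iic hgap] at hint
  calc ‖duhamel lam h t‖ ≤ Real.exp (lam.re * t) *
        (Real.exp ((-lam.re - a) * t) / (-lam.re - a) * (c * (Real.exp (a * t) * ω t))) := by
        rw [duhamel, norm_smul, norm_cexp_mul_ofReal]
        gcongr
    _ = (-lam.re - a)⁻¹ * c * ω t * Real.exp (lam.re * t + (-lam.re - a) * t + a * t) := by
        rw [Real.exp_add, Real.exp_add]; ring
    _ = (-lam.re - a)⁻¹ * c * ω t := by ring_nf; rw [Real.exp_zero, mul_one]

theorem eq_zero_of_hasDerivAt_smul_self (hlam : lam.re < 0) {w : ℝ → V}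
    (hw : ∀ t, HasDerivAt w (lam • w t) t) (hbdd : ∃ K, ∀ t, ‖w t‖ ≤ K) : w = 0 := by
  obtain ⟨K, hK⟩ := hbdd
  have hderiv : ∀ t : ℝ, HasDerivAt (fun t : ℝ => Complex.exp (-lam * t) • w t) 0 t := fun t =>
    ((hasDerivAt_cexp_mul_ofReal (-lam) t).smul (hw t)).congr_deriv <| by
      rw [smul_smul, ← add_smul]
      ring_nf
      exact zero_smul _ _
  have hconst := is_const_of_deriv_eq_zero (fun t => (hderiv t).differentiableAt)
    fun t => (hderiv t).deriv
  have hle : ∀ t s : ℝ, ‖w t‖ * Real.exp (-lam.re * t) ≤ K * Real.exp (-lam.re * s) := fun t s => by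
    have hts := congrArg norm (hconst t s)
    simp only [norm_smul, norm_cexp_mul_ofReal, Complex.neg_re] at hts
    rw [mul_comm, hts, mul_comm]
    gcongr
    exact hK s
  have hlim : Tendsto (fun s => K * Real.exp (-lam.re * s)) atBot (𝓝 0) := by
    simpa using (Real.tendsto_exp_atBot.comp
      (tendsto_id.const_mul_atBot (neg_pos.2 hlam))).const_mul K
  funext t
  have hzero := ge_of_tendsto' hlim (hle t)
  exact norm_le_zero_iff.1 (nonpos_of_mul_nonpos_left hzero (Real.exp_pos _))

theorem hasGreenBound_smul_id_of_re_neg [CompleteSpace V] (ha : 0 < a) (hlam : a < -lam.re) :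
    HasGreenBound (lam • ContinuousLinearMap.id ℝ V) a (-lam.re - a)⁻¹ where
  rate_pos := ha
  const_nonneg := inv_nonneg.2 (sub_nonneg.2 hlam.le)
  exists_sol h hh hbdd := by
    obtain ⟨K, hK⟩ := hbdd
    refine ⟨duhamel lam h, ⟨fun t => ?_, hh, ⟨K, hK⟩, (-lam.re - a)⁻¹ * K, fun t => ?_⟩,
      fun ω c hω hc => norm_duhamel_le hlam hω hc⟩
    · simpa using hasDerivAt_duhamel (neg_pos.1 (ha.trans hlam)) hh ⟨K, hK⟩ t
    · simpa only [mul_one] using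
        norm_duhamel_le hlam (.one ha.le) (fun s => (hK s).trans_eq (mul_one K).symm) t
  eq_zero w hw := eq_zero_of_hasDerivAt_smul_self (neg_pos.1 (ha.trans hlam))
    (fun t => by simpa using hw.hasDerivAt t) hw.bdd

theorem hasGreenBound_smul_id [CompleteSpace V] (ha : 0 < a) (hlam : a < |lam.re|) :
    HasGreenBound (lam • ContinuousLinearMap.id ℝ V) a (|lam.re| - a)⁻¹ := by
  rcases abs_cases lam.re with ⟨hre, -⟩ | ⟨hre, -⟩
  · have hneg := (hasGreenBound_smul_id_of_re_neg (V := V) (lam := -lam) ha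
      (by simpa [hre] using hlam)).neg
    simpa [hre] using hneg
  · rw [hre] at hlam ⊢
    exact hasGreenBound_smul_id_of_re_neg ha hlam

open Polynomial in
theorem exists_isBddSol_of_aeval_prod_eq_zero [CompleteSpace V] (A : V →L[ℂ] V) (ha : 0 < a)
    (S : Multiset ℂ) (hS : ∀ lam ∈ S, a < |lam.re|) :
    ∃ M, 0 ≤ M ∧ ∀ h : ℝ → V, Continuous h → (∃ K, ∀ t, ‖h t‖ ≤ K) →
      (∀ t, aeval A (S.map fun lam => X - C lam).prod (h t) = 0) →
      ∃ y, IsBddSol (A.restrictScalars ℝ) 1 y h ∧ ∀ ω c, IsExpWeight a ω →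
        (∀ s, ‖h s‖ ≤ c * ω s) → ∀ t, ‖y t‖ ≤ M * c * ω t := by
  induction S using Multiset.induction_on with
  | empty =>
    refine ⟨0, le_rfl, fun h hh hbdd hzero => ⟨0, ⟨fun t => ?_, hh, hbdd, 0, by simp⟩, by simp⟩⟩
    have hht : h t = 0 := by simpa using hzero t
    simp [hht]
  | cons lam S ih =>
    obtain ⟨M, hM, ih⟩ := ih fun μ hμ => hS μ (Multiset.mem_cons_of_mem hμ)
    have hlam := hasGreenBound_smul_id (V := V) ha (hS lam (Multiset.mem_cons_self lam S))
    set N := (|lam.re| - a)⁻¹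
    set B := A - lam • ContinuousLinearMap.id ℂ V
    have hfactor : ∀ v, aeval A ((lam ::ₘ S).map fun lam => X - C lam).prod v =
        aeval A (S.map fun lam => X - C lam).prod (B v) := fun v => by
      rw [Multiset.map_cons, Multiset.prod_cons, mul_comm, map_mul, map_sub, aeval_X, aeval_C]
      rfl
    refine ⟨N + M * (‖B‖ * N), add_nonneg hlam.const_nonneg (mul_nonneg hM
      (mul_nonneg (norm_nonneg _) hlam.const_nonneg)), fun h hh hbdd hzero => ?_⟩
    obtain ⟨u, hu, huω⟩ := hlam.exists_sol h hh hbdd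
    obtain ⟨K, hK⟩ := hu.bdd
    have hPu : ∀ t, aeval A (S.map fun lam => X - C lam).prod (B (u t)) = 0 := fun t => by
      set P := aeval A ((lam ::ₘ S).map fun lam => X - C lam).prod
      have hmap := hu.map (P.restrictScalars ℝ) (B := lam • .id ℝ V) fun v => by simp
      rw [← hfactor]
      exact congrFun (hlam.eq_zero _ (by simpa [Pi.zero_def, hzero] using hmap)) t
    -- `y = u + z`, where `z` solves the equation forced by the defect `A u - lam u`.
    obtain ⟨z, hz, hzω⟩ := ih (fun t => B (u t)) (B.continuous.comp hu.continuous)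
      ⟨‖B‖ * K, fun t => B.le_opNorm_of_le (hK t)⟩ hPu
    refine ⟨u + z, ⟨fun t => ?_, hh, hbdd, ?_⟩, fun ω c hω hc t => ?_⟩
    · refine ((hu.hasDerivAt t).add (hz.hasDerivAt t)).congr_deriv ?_
      simp [B]
      abel
    · exact let ⟨K', hK'⟩ := hz.bdd; ⟨K + K', fun t => norm_add_le_of_le (hK t) (hK' t)⟩
    · have hBu : ∀ s, ‖B (u s)‖ ≤ ‖B‖ * (N * c) * ω s := fun s =>
        (B.le_opNorm_of_le (huω ω c hω hc s)).trans_eq (by ring)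
      exact (norm_add_le_of_le (huω ω c hω hc t) (hzω ω _ hω hBu t)).trans_eq (by ring)

open Polynomial in
theorem IsBddSol.eq_zero_of_aeval_prod_eq_zero [CompleteSpace V] {A : V →L[ℂ] V} (S : Multiset ℂ)
    (hS : ∀ lam ∈ S, lam.re ≠ 0) {y : ℝ → V} (hy : IsBddSol (A.restrictScalars ℝ) 1 y 0)
    (hzero : ∀ t, aeval A (S.map fun lam => X - C lam).prod (y t) = 0) : y = 0 := by
  induction S using Multiset.induction_on with
  | empty => exact funext fun t => by simpa using hzero t
  | cons lam S ih =>
    refine ih (fun μ hμ => hS μ (Multiset.mem_cons_of_mem hμ)) (congrFun ?_)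
    have hlam := abs_pos.2 (hS lam (Multiset.mem_cons_self lam S))
    set P := aeval A (S.map fun lam => X - C lam).prod
    have hcomm : Commute P A := by
      simpa only [aeval_X] using (Commute.all (S.map fun lam => X - C lam).prod X).map
        (aeval (R := ℂ) A)
    have hmap := hy.map (B := A.restrictScalars ℝ) (P.restrictScalars ℝ) fun v =>
      DFunLike.congr_fun hcomm.eq v
    have hPy : ∀ t, A (P (y t)) = lam • P (y t) := fun t => by
      have hprod := hzero t
      rw [Multiset.map_cons, Multiset.prod_cons, map_mul, map_sub, aeval_X, aeval_C] at hprod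
      exact sub_eq_zero.1 hprod
    refine (hasGreenBound_smul_id (V := V) (half_pos hlam) (half_lt_self hlam)).eq_zero _
      ⟨fun t => ?_, continuous_const, ⟨0, by simp⟩, ?_⟩
    · refine (hmap.hasDerivAt t).congr_deriv ?_
      simp [hPy]
    · exact hmap.bdd

open Polynomial in
theorem exists_hasGreenBound_of_aeval_prod_eq_zero [CompleteSpace V] (A : V →L[ℂ] V)
    (S : Multiset ℂ) (hS : ∀ lam ∈ S, lam.re ≠ 0)
    (hzero : aeval A (S.map fun lam => X - C lam).prod = 0) :
    ∃ a M, HasGreenBound (A.restrictScalars ℝ) a M := by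
  have hrate : ∀ᶠ a : ℝ in 𝓝[>] 0, ∀ lam ∈ S.toFinset, a < |lam.re| :=
    (eventually_all_finset _).2 fun lam hlam =>
      nhdsWithin_le_nhds (eventually_lt_nhds (abs_pos.2 (hS lam (Multiset.mem_toFinset.1 hlam))))
  obtain ⟨a, haS, ha⟩ := (hrate.and self_mem_nhdsWithin).exists
  obtain ⟨M, hM, hsol⟩ := exists_isBddSol_of_aeval_prod_eq_zero A ha S fun lam hlam =>
    haS lam (Multiset.mem_toFinset.2 hlam)
  exact ⟨a, M, ha, hM, fun h hh hbdd => hsol h hh hbdd fun t => by rw [hzero]; rfl,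
    fun y hy => hy.eq_zero_of_aeval_prod_eq_zero S hS fun t => by rw [hzero]; rfl⟩

theorem exists_hasGreenBound_toLin' {ι : Type*} [Fintype ι] [DecidableEq ι] (B : Matrix ι ι ℂ)
    (hB : ∀ μ, B.charpoly.IsRoot μ → μ.re ≠ 0) :
    ∃ a M, HasGreenBound ((Matrix.toLin' B).toContinuousLinearMap.restrictScalars ℝ) a M := by
  refine exists_hasGreenBound_of_aeval_prod_eq_zero _ B.charpoly.roots
    (fun μ hμ => hB μ (Polynomial.isRoot_of_mem_roots hμ)) ?_
  rw [← (IsAlgClosed.splits B.charpoly).eq_prod_roots_of_monic B.charpoly_monic]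
  let toCLM : Matrix ι ι ℂ →ₐ[ℂ] ((ι → ℂ) →L[ℂ] (ι → ℂ)) :=
    (Module.End.toContinuousLinearMap (𝕜 := ℂ) (ι → ℂ)).toAlgHom.comp
      (Matrix.toLinAlgEquiv' : Matrix ι ι ℂ ≃ₐ[ℂ] _).toAlgHom
  change Polynomial.aeval (toCLM B) B.charpoly = 0
  rw [Polynomial.aeval_algHom_apply, B.aeval_self_charpoly, map_zero]

theorem toEuclideanLin_clmToMatrix {n : ℕ}
    (A : EuclideanSpace ℝ (Fin n) →L[ℝ] EuclideanSpace ℝ (Fin n)) (x : EuclideanSpace ℝ (Fin n)) :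
    Matrix.toEuclideanLin (clmToMatrix A) x = A x := by
  rw [clmToMatrix, LinearEquiv.apply_symm_apply]
  rfl

theorem exists_hasGreenBound_of_charpoly {n : ℕ}
    (A : EuclideanSpace ℝ (Fin n) →L[ℝ] EuclideanSpace ℝ (Fin n))
    (hA : ∀ μ : ℂ, ((clmToMatrix A).map Complex.ofReal).charpoly.IsRoot μ → μ.re ≠ 0) :
    ∃ a M, HasGreenBound A a M := by
  obtain ⟨a, M, hB⟩ := exists_hasGreenBound_toLin' _ hA
  let ι : EuclideanSpace ℝ (Fin n) →L[ℝ] (Fin n → ℂ) :=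
    .pi fun i => Complex.ofRealCLM.comp (EuclideanSpace.proj i)
  let ρ : (Fin n → ℂ) →L[ℝ] EuclideanSpace ℝ (Fin n) :=
    ((EuclideanSpace.equiv (Fin n) ℝ).symm : (Fin n → ℝ) →L[ℝ] EuclideanSpace ℝ (Fin n)).comp
      (.pi fun i => Complex.reCLM.comp (.proj i))
  have hAx : ∀ x i, A x i = ∑ j, clmToMatrix A i j * x j := fun x i => by
    rw [← toEuclideanLin_clmToMatrix]
    rfl
  have hι : ∀ x i, ι x i = (x i : ℂ) := fun x i => rfl
  have hρ : ∀ v i, ρ v i = (v i).re := fun v i => rfl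
  refine ⟨a, _, hB.of_retract ι ρ (fun x => ?_) (fun x => ?_) fun v => ?_⟩
  · ext i
    rw [hρ, hι, Complex.ofReal_re]
  · ext i
    simp [hι, hAx, Matrix.mulVec, dotProduct]
  · ext i
    simp [hρ, hAx, Matrix.mulVec, dotProduct]

end LinearEquation

section AveragedPerturbation

variable {E : Type*} [NormedAddCommGroup E] [NormedSpace ℝ E]

/-- `g` is a perturbation that is small after averaging: on the ball of radius `r` it is bounded by
`C` and is, at each time, `ε`-Lipschitz close to a linear map of norm at most `L`, while
its averages over windows of length `T` are at most `ε * r`. -/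
structure AvgSmall (r : ℝ) (ε : ℝ≥0) (L T C : ℝ) (g : ℝ → E → E) : Prop where
  radius_pos : 0 < r
  window_pos : 0 < T
  continuousOn : ContinuousOn (fun p : ℝ × E => g p.1 p.2) (Set.univ ×ˢ closedBall 0 r)
  norm_le : ∀ t, ∀ v ∈ closedBall (0 : E) r, ‖g t v‖ ≤ C
  approx : ∀ t, ∃ D : E →L[ℝ] E, ‖D‖ ≤ L ∧ ApproximatesLinearOn (g t) D (closedBall 0 r) ε
  norm_windowAvg_le : ∀ v ∈ closedBall (0 : E) r, ∀ t, ‖windowAvg T (fun s => g s v) t‖ ≤ ε * r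

namespace AvgSmall

variable {r L T C : ℝ} {ε : ℝ≥0} {g : ℝ → E → E} {u v u' v' : E}

theorem linearBound_nonneg (hg : AvgSmall r ε L T C g) : 0 ≤ L :=
  let ⟨_, hD, _⟩ := hg.approx 0
  (norm_nonneg _).trans hD

theorem continuous_comp (hg : AvgSmall r ε L T C g) {y : ℝ → E} (hy : Continuous y)
    (hyr : ∀ t, y t ∈ closedBall 0 r) : Continuous fun t => g t (y t) :=
  hg.continuousOn.comp_continuous (continuous_id.prodMk hy) fun t => ⟨trivial, hyr t⟩

theorem norm_sub_le (hg : AvgSmall r ε L T C g) (t : ℝ) (hu : u ∈ closedBall 0 r)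
    (hv : v ∈ closedBall 0 r) : ‖g t u - g t v‖ ≤ (L + ε) * ‖u - v‖ := by
  obtain ⟨D, hD, happrox⟩ := hg.approx t
  calc ‖g t u - g t v‖ = ‖D (u - v) + (g t u - g t v - D (u - v))‖ := by rw [add_sub_cancel]
    _ ≤ L * ‖u - v‖ + ε * ‖u - v‖ :=
        norm_add_le_of_le (D.le_of_opNorm_le hD _) (happrox u hu v hv)
    _ = (L + ε) * ‖u - v‖ := by ring

theorem norm_sub_sub_sub_le (hg : AvgSmall r ε L T C g) (t : ℝ) (hu : u ∈ closedBall 0 r)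
    (hv : v ∈ closedBall 0 r) (hu' : u' ∈ closedBall 0 r) (hv' : v' ∈ closedBall 0 r) (θ : ℝ) :
    ‖g t u - g t v - θ • (g t u' - g t v')‖ ≤
      L * ‖u - v - θ • (u' - v')‖ + ε * (‖u - v‖ + ‖θ • (u' - v')‖) := by
  obtain ⟨D, hD, happrox⟩ := hg.approx t
  have hsplit : g t u - g t v - θ • (g t u' - g t v') = D (u - v - θ • (u' - v')) +
      ((g t u - g t v - D (u - v)) - θ • (g t u' - g t v' - D (u' - v'))) := by
    rw [map_sub, map_smul]
    module
  have herr : ‖(g t u - g t v - D (u - v)) - θ • (g t u' - g t v' - D (u' - v'))‖ ≤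
      ε * ‖u - v‖ + ‖θ‖ * (ε * ‖u' - v'‖) := by
    refine norm_sub_le_of_le (happrox u hu v hv) ?_
    rw [norm_smul]
    exact mul_le_mul_of_nonneg_left (happrox u' hu' v' hv') (norm_nonneg θ)
  rw [hsplit]
  refine (norm_add_le_of_le (D.le_of_opNorm_le hD _) herr).trans_eq ?_
  rw [norm_smul θ]
  ring

-- The difference at `u, v` is compared with the rescaled one at a boundary point and the centre,
-- which turns the bound `ε * r` on averages into a Lipschitz bound.
theorem norm_windowAvg_sub_le (hg : AvgSmall r ε L T C g) (hu : u ∈ closedBall 0 r)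
    (hv : v ∈ closedBall 0 r) (t : ℝ) :
    ‖windowAvg T (fun s => g s u - g s v) t‖ ≤ 4 * ε * ‖u - v‖ := by
  rcases eq_or_ne u v with rfl | huv
  · simp [windowAvg]
  have hpos : 0 < ‖u - v‖ := norm_pos_iff.2 (sub_ne_zero.2 huv)
  have hr := hg.radius_pos
  set w := (r / ‖u - v‖) • (u - v) with hw
  set θ := ‖u - v‖ / r
  have hθ : 0 ≤ θ := by positivity
  have hθw : θ • (w - 0) = u - v := by
    rw [sub_zero, hw, smul_smul, div_mul_div_cancel₀ hr.ne', div_self hpos.ne', one_smul]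
  have hzero : (0 : E) ∈ closedBall 0 r := mem_closedBall_self hr.le
  have hwr : w ∈ closedBall 0 r := by
    rw [mem_closedBall_zero_iff, hw, norm_smul, norm_div, norm_norm, Real.norm_of_nonneg hr.le,
      div_mul_cancel₀ _ hpos.ne']
  have hcont : ∀ x ∈ closedBall (0 : E) r, Continuous fun s => g s x := fun x hx =>
    hg.continuous_comp continuous_const fun _ => hx
  have hcontw := ((hcont w hwr).sub (hcont 0 hzero)).const_smul θ
  have hmodel : ‖windowAvg T (fun s => θ • (g s w - g s 0)) t‖ ≤ 2 * ε * ‖u - v‖ := by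
    rw [windowAvg_smul, windowAvg_sub (hcont w hwr) (hcont 0 hzero), norm_smul,
      Real.norm_of_nonneg hθ]
    calc θ * ‖windowAvg T (fun s => g s w) t - windowAvg T (fun s => g s 0) t‖
        ≤ θ * (ε * r + ε * r) := by
          gcongr
          exact norm_sub_le_of_le (hg.norm_windowAvg_le w hwr t) (hg.norm_windowAvg_le 0 hzero t)
      _ = θ * r * (2 * ε) := by ring
      _ = 2 * ε * ‖u - v‖ := by rw [div_mul_cancel₀ _ hr.ne', mul_comm]
  refine (norm_windowAvg_le_of_norm_sub_le hg.window_pos ((hcont u hu).sub (hcont v hv)) hcontw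
    (fun s _ => hg.norm_sub_sub_sub_le s hu hv hwr hzero θ) hmodel).trans_eq ?_
  rw [hθw, sub_self, norm_zero]
  ring

theorem norm_windowAvg_comp_sub_le (hg : AvgSmall r ε L T C g) {y₁ y₂ : ℝ → E}
    (hy₁ : Continuous y₁) (hy₂ : Continuous y₂) (hr₁ : ∀ t, y₁ t ∈ closedBall 0 r)
    (hr₂ : ∀ t, y₂ t ∈ closedBall 0 r) {t d p : ℝ}
    (hd : ∀ s ∈ Set.Icc t (t + T), ‖y₁ s - y₂ s‖ ≤ d)
    (hp : ∀ s ∈ Set.Icc t (t + T), ‖y₁ s - y₂ s - (y₁ t - y₂ t)‖ ≤ p) :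
    ‖windowAvg T (fun s => g s (y₁ s) - g s (y₂ s)) t‖ ≤ L * p + 6 * ε * d := by
  have hL := hg.linearBound_nonneg
  have hdt := hd t ⟨le_rfl, le_add_of_nonneg_right hg.window_pos.le⟩
  have hfrozen : ‖windowAvg T (fun s => g s (y₁ t) - g s (y₂ t)) t‖ ≤ 4 * ε * d :=
    (hg.norm_windowAvg_sub_le (hr₁ t) (hr₂ t) t).trans (by gcongr)
  refine (norm_windowAvg_le_of_norm_sub_le (K₁ := L * p + ε * (d + d)) hg.window_pos
    ((hg.continuous_comp hy₁ hr₁).sub (hg.continuous_comp hy₂ hr₂))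
    ((hg.continuous_comp continuous_const fun _ => hr₁ t).sub
      (hg.continuous_comp continuous_const fun _ => hr₂ t)) (fun s hs => ?_) hfrozen).trans_eq
    (by ring)
  have hsecond := hg.norm_sub_sub_sub_le s (hr₁ s) (hr₂ s) (hr₁ t) (hr₂ t) 1
  rw [one_smul, one_smul] at hsecond
  refine hsecond.trans ?_
  gcongr
  exacts [hp s hs, hd s hs]

end AvgSmall

end AveragedPerturbation

section AveragingEstimate

variable {E : Type*} [NormedAddCommGroup E] [NormedSpace ℝ E] [CompleteSpace E] {A : E →L[ℝ] E}
  {a M ν T : ℝ} {ω : ℝ → ℝ}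

theorem norm_windowAvg_sub_const_le (hT : 0 < T) {z : ℝ → E} (hz : Continuous z) {v : E} {K t : ℝ}
    (hK : ∀ s ∈ Set.Icc t (t + T), ‖z s - v‖ ≤ K) : ‖windowAvg T z t - v‖ ≤ K := by
  rw [← windowAvg_const hT.ne' v t, ← windowAvg_sub hz continuous_const]
  exact norm_windowAvg_le hT hK

theorem HasGreenBound.norm_le_of_norm_windowAvg_le (hA : HasGreenBound A a M) (hν : 0 < ν)
    (hT : 0 < T) {y h : ℝ → E} (hy : IsBddSol A ν y h) (hω : IsExpWeight (ν * a) ω) {c d : ℝ}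
    (hc : ∀ s, ‖h s‖ ≤ c * ω s) (hd : ∀ s, ‖windowAvg T h s‖ ≤ d * ω s) (t : ℝ) :
    ‖y t‖ ≤ (M * d + ν * T * Real.exp (ν * a * T) * ((‖A‖ * M + 1) * c)) * ω t := by
  have hc₀ : 0 ≤ c := nonneg_of_mul_nonneg_left ((norm_nonneg _).trans (hc 0)) (hω.pos 0)
  have havg : ‖windowAvg T y t‖ ≤ M * d * ω t := hA.norm_le hν (hy.windowAvg hT) hω hd t
  have hdrift : ‖windowAvg T y t - y t‖ ≤
      ν * T * Real.exp (ν * a * T) * (‖A‖ * (M * c) + c) * ω t :=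
    norm_windowAvg_sub_const_le hT hy.continuous fun s hs =>
      hy.norm_sub_le_of_mem_window hν.le (mul_nonneg hν.le hA.rate_pos.le)
        (mul_nonneg hA.const_nonneg hc₀) hc₀ hω (hA.norm_le hν hy hω hc) hc hs
  calc ‖y t‖ ≤ ‖windowAvg T y t‖ + ‖windowAvg T y t - y t‖ := norm_le_norm_add_norm_sub _ _
    _ ≤ _ := add_le_add havg hdrift
    _ = _ := by ring

end AveragingEstimate

theorem eventually_lt_nhdsGT_zero_of_continuous {F : ℝ → ℝ} {c : ℝ} (hF : Continuous F)
    (hc : F 0 < c) : ∀ᶠ ν in 𝓝[>] 0, F ν < c :=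
  nhdsWithin_le_nhds (hF.continuousAt.eventually_lt continuousAt_const hc)

theorem norm_le_two_mul_of_forall_improve {E : Type*} [NormedAddCommGroup E] {ω : ℝ → ℝ} {z : ℝ → E}
    {c : ℝ} (hω : ∀ t, 0 < ω t)
    (hbdd : ∃ K, ∀ t, ‖z t‖ ≤ K * ω t)
    (h : ∀ d, (∀ t, ‖z t‖ ≤ d * ω t) → ∀ t, ‖z t‖ ≤ (d / 2 + c) * ω t) (t : ℝ) :
    ‖z t‖ ≤ 2 * c * ω t := by
  obtain ⟨K, hK⟩ := hbdd
  have hrange : BddAbove (Set.range fun t => ‖z t‖ / ω t) :=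
    ⟨K, Set.forall_mem_range.2 fun t => (div_le_iff₀ (hω t)).2 (hK t)⟩
  have hsup : ∀ t, ‖z t‖ ≤ (⨆ t, ‖z t‖ / ω t) * ω t := fun t =>
    (div_le_iff₀ (hω t)).1 (le_ciSup hrange t)
  have himprove : (⨆ t, ‖z t‖ / ω t) ≤ (⨆ t, ‖z t‖ / ω t) / 2 + c :=
    ciSup_le fun t => (div_le_iff₀ (hω t)).2 (h _ hsup t)
  refine (hsup t).trans (mul_le_mul_of_nonneg_right ?_ (hω t).le)
  linarith

section PerturbedEquation

variable {E : Type*} [NormedAddCommGroup E] [NormedSpace ℝ E] [CompleteSpace E] {A : E →L[ℝ] E}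
  {a M ν r L T C : ℝ} {ε : ℝ≥0} {ω : ℝ → ℝ}

theorem HasGreenBound.norm_le_of_avgSmall (hA : HasGreenBound A a M) (hν : 0 < ν)
    {g : ℝ → E → E} (hg : AvgSmall r ε L T C g) (hω : IsExpWeight (ν * a) ω)
    {y₁ y₂ f w e : ℝ → E} (hy₁ : Continuous y₁) (hy₂ : Continuous y₂)
    (hr₁ : ∀ t, y₁ t ∈ closedBall 0 r) (hr₂ : ∀ t, y₂ t ∈ closedBall 0 r)
    (hsub : IsBddSol A ν (y₁ - y₂) f)
    (hw : IsBddSol A ν w fun t => g t (y₁ t) - g t (y₂ t) + e t) {d q η : ℝ}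
    (hd : ∀ t, ‖y₁ t - y₂ t‖ ≤ d * ω t) (hq : ∀ t, ‖f t‖ ≤ q * ω t)
    (hη : ∀ t, ‖e t‖ ≤ η * ω t) (t : ℝ) :
    ‖w t‖ ≤ (M * (L * (ν * T * Real.exp (ν * a * T) * (‖A‖ * d + q)) +
      6 * ε * (Real.exp (ν * a * T) * d) + Real.exp (ν * a * T) * η) +
      ν * T * Real.exp (ν * a * T) * ((‖A‖ * M + 1) * ((L + ε) * d + η))) * ω t := by
  have hT := hg.window_pos
  have hL := hg.linearBound_nonneg
  have hb : 0 ≤ ν * a := mul_nonneg hν.le hA.rate_pos.le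
  have hnonneg : ∀ {z : ℝ → E} {c : ℝ}, (∀ t, ‖z t‖ ≤ c * ω t) → 0 ≤ c := fun hz =>
    nonneg_of_mul_nonneg_left ((norm_nonneg _).trans (hz 0)) (hω.pos 0)
  have hd₀ : 0 ≤ d := hnonneg hd
  have hq₀ : 0 ≤ q := hnonneg hq
  have hη₀ : 0 ≤ η := hnonneg hη
  have hgdiff : Continuous fun t => g t (y₁ t) - g t (y₂ t) :=
    (hg.continuous_comp hy₁ hr₁).sub (hg.continuous_comp hy₂ hr₂)
  refine hA.norm_le_of_norm_windowAvg_le hν hT hw hω (fun s => ?_) (fun s => ?_) t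
  · refine (norm_add_le_of_le (hg.norm_sub_le s (hr₁ s) (hr₂ s)) (hη s)).trans ?_
    calc (L + ε) * ‖y₁ s - y₂ s‖ + η * ω s ≤ (L + ε) * (d * ω s) + η * ω s := by
          gcongr
          exact hd s
      _ = ((L + ε) * d + η) * ω s := by ring
  · have hwindow : ∀ x ∈ Set.Icc s (s + T), ω x ≤ Real.exp (ν * a * T) * ω s := fun x hx =>
      hω.le_of_mem_window hb hx
    have havg := hg.norm_windowAvg_comp_sub_le hy₁ hy₂ hr₁ hr₂
      (fun x hx => (hd x).trans (mul_le_mul_of_nonneg_left (hwindow x hx) hd₀))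
      (fun x hx => hsub.norm_sub_le_of_mem_window hν.le hb hd₀ hq₀ hω hd hq hx)
    refine (norm_windowAvg_le_of_norm_sub_le (K₁ := η * (Real.exp (ν * a * T) * ω s)) hT
      hw.continuous_forcing hgdiff (fun x hx => ?_) havg).trans_eq ?_
    · rw [add_sub_cancel_left]
      exact (hη x).trans (mul_le_mul_of_nonneg_left (hwindow x hx) hη₀)
    · ring

theorem HasGreenBound.eventually_norm_le_of_avgSmall (hA : HasGreenBound A a M) (hε : 0 < ε)
    (r L T C : ℝ) :
    ∀ᶠ ν in 𝓝[>] 0, ∀ g : ℝ → E → E, AvgSmall r ε L T C g → ∀ ω, IsExpWeight (ν * a) ω →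
      ∀ y₁ y₂ f w e : ℝ → E, Continuous y₁ → Continuous y₂ →
      (∀ t, y₁ t ∈ closedBall 0 r) → (∀ t, y₂ t ∈ closedBall 0 r) → IsBddSol A ν (y₁ - y₂) f →
      IsBddSol A ν w (fun t => g t (y₁ t) - g t (y₂ t) + e t) → ∀ d q η,
      (∀ t, ‖y₁ t - y₂ t‖ ≤ d * ω t) → (∀ t, ‖f t‖ ≤ q * ω t) → (∀ t, ‖e t‖ ≤ η * ω t) →
      ∀ t, ‖w t‖ ≤ ((6 * M + 1) * ε * d + ε * q + (M + 1) * η) * ω t := by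
  set coeffD : ℝ → ℝ := fun ν => M * (L * (ν * T * Real.exp (ν * a * T) * ‖A‖) +
    6 * ε * Real.exp (ν * a * T)) + ν * T * Real.exp (ν * a * T) * ((‖A‖ * M + 1) * (L + ε))
  set coeffQ : ℝ → ℝ := fun ν => M * (L * (ν * T * Real.exp (ν * a * T)))
  set coeffH : ℝ → ℝ := fun ν => M * Real.exp (ν * a * T) +
    ν * T * Real.exp (ν * a * T) * (‖A‖ * M + 1)
  have hD : ∀ᶠ ν in 𝓝[>] 0, coeffD ν < (6 * M + 1) * ε :=
    eventually_lt_nhdsGT_zero_of_continuous (by fun_prop) (by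
      simp only [coeffD, zero_mul, mul_zero, Real.exp_zero, mul_one, zero_add, add_zero]
      linarith [NNReal.coe_pos.2 hε])
  have hQ : ∀ᶠ ν in 𝓝[>] 0, coeffQ ν < ε :=
    eventually_lt_nhdsGT_zero_of_continuous (by fun_prop) (by simpa [coeffQ] using hε)
  have hH : ∀ᶠ ν in 𝓝[>] 0, coeffH ν < M + 1 :=
    eventually_lt_nhdsGT_zero_of_continuous (by fun_prop) (by simp [coeffH])
  filter_upwards [self_mem_nhdsWithin, hD, hQ, hH] with ν hν hDν hQν hHν g hg ω hω y₁ y₂ f w e hy₁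
    hy₂ hr₁ hr₂ hsub hw d q η hd hq hη t
  have hnonneg : ∀ {z : ℝ → E} {c : ℝ}, (∀ t, ‖z t‖ ≤ c * ω t) → 0 ≤ c := fun hz =>
    nonneg_of_mul_nonneg_left ((norm_nonneg _).trans (hz 0)) (hω.pos 0)
  have hd₀ : 0 ≤ d := hnonneg hd
  have hq₀ : 0 ≤ q := hnonneg hq
  have hη₀ : 0 ≤ η := hnonneg hη
  have hωt := (hω.pos t).le
  calc ‖w t‖ ≤ (coeffD ν * d + coeffQ ν * q + coeffH ν * η) * ω t :=
        (hA.norm_le_of_avgSmall hν hg hω hy₁ hy₂ hr₁ hr₂ hsub hw hd hq hη t).trans_eq (by ring)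
    _ ≤ _ := by gcongr

theorem HasGreenBound.eventually_norm_sub_le (hA : HasGreenBound A a M) (hε : 0 < ε) (r T C : ℝ)
    (hεL : ε * (6 * M + 1 + (L + ε)) ≤ 1 / 2) :
    ∀ᶠ ν in 𝓝[>] 0, ∀ g : ℝ → E → E, AvgSmall r ε L T C g → ∀ y₁ y₂ e : ℝ → E,
      (∀ t, y₁ t ∈ closedBall 0 r) → (∀ t, y₂ t ∈ closedBall 0 r) →
      IsBddSol A ν y₁ (fun t => g t (y₁ t) + e t) → IsBddSol A ν y₂ (fun t => g t (y₂ t)) →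
      ∀ η t, (∀ s, ‖e s‖ ≤ η * Real.exp (ν * a * |s - t|)) →
      ‖y₁ t - y₂ t‖ ≤ 2 * (M + 1 + ε) * η := by
  filter_upwards [self_mem_nhdsWithin, hA.eventually_norm_le_of_avgSmall hε r L T C] with ν hν hw g
    hg y₁ y₂ e hr₁ hr₂ hy₁ hy₂ η t hη
  have hω : IsExpWeight (ν * a) fun s => Real.exp (ν * a * |s - t|) :=
    .exp_abs_sub (mul_nonneg (le_of_lt hν) hA.rate_pos.le) t
  have hsub : IsBddSol A ν (y₁ - y₂) fun t => g t (y₁ t) - g t (y₂ t) + e t := by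
    convert hy₁.sub hy₂ using 1
    funext s
    exact sub_add_eq_add_sub _ _ _
  obtain ⟨K, hK⟩ := hsub.bdd
  have hbound := norm_le_two_mul_of_forall_improve (c := (M + 1 + ε) * η) hω.pos
    ⟨K, fun s => (hK s).trans (le_mul_of_one_le_right ((norm_nonneg _).trans (hK s))
      (Real.one_le_exp (mul_nonneg (mul_nonneg (le_of_lt hν) hA.rate_pos.le) (abs_nonneg _))))⟩
    (fun d hd s => ?_) t
  · simpa [mul_assoc] using hbound
  · have hforcing : ∀ x, ‖g x (y₁ x) - g x (y₂ x) + e x‖ ≤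
        ((L + ε) * d + η) * Real.exp (ν * a * |x - t|) := fun x => by
      refine (norm_add_le_of_le ((hg.norm_sub_le x (hr₁ x) (hr₂ x)).trans
        (mul_le_mul_of_nonneg_left (hd x) (add_nonneg hg.linearBound_nonneg ε.2)))
        (hη x)).trans_eq ?_
      ring
    have hd₀ : 0 ≤ d := nonneg_of_mul_nonneg_left ((norm_nonneg _).trans (hd t)) (hω.pos t)
    refine (hw g hg _ hω y₁ y₂ _ _ e hy₁.continuous hy₂.continuous hr₁ hr₂ hsub hsub d _ η hd
      hforcing hη s).trans (mul_le_mul_of_nonneg_right ?_ (hω.pos s).le)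
    calc (6 * M + 1) * ε * d + ε * ((L + ε) * d + η) + (M + 1) * η =
          ε * (6 * M + 1 + (L + ε)) * d + (M + 1 + ε) * η := by ring
      _ ≤ 1 / 2 * d + (M + 1 + ε) * η := by gcongr
      _ = d / 2 + (M + 1 + ε) * η := by ring

end PerturbedEquation

section FixedPoint

open scoped BoundedContinuousFunction

variable {E : Type*} [NormedAddCommGroup E] {r : ℝ} {K : ℝ≥0}

/-- The domain of the fixed point argument: functions with values in the ball of radius `r` whose
Lipschitz constant `K` will be proportional to the speed of the equation, so that they are nearly
constant on averaging windows. -/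
def slowBall (r : ℝ) (K : ℝ≥0) : Set (ℝ →ᵇ E) :=
  {u | (∀ t, u t ∈ closedBall 0 r) ∧ LipschitzWith K u}

theorem isClosed_slowBall : IsClosed (slowBall (E := E) r K) := by
  have hball : IsClosed {u : ℝ →ᵇ E | ∀ t, u t ∈ closedBall 0 r} := by
    rw [Set.ofPred_forall]
    exact isClosed_iInter fun t => isClosed_closedBall.preimage
      ((continuous_apply t).comp BoundedContinuousFunction.continuous_coe)
  exact hball.inter
    ((isClosed_setOfPred_lipschitzWith (α := ℝ) (β := E) K).preimage
      BoundedContinuousFunction.continuous_coe)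

theorem zero_mem_slowBall (hr : 0 ≤ r) : (0 : ℝ →ᵇ E) ∈ slowBall r K :=
  ⟨fun _ => mem_closedBall_self hr, LipschitzWith.const' 0⟩

variable [NormedSpace ℝ E] {A : E →L[ℝ] E} {a M ν L T C : ℝ} {ε : ℝ≥0}

theorem lipschitzWith_of_hasDerivAt {y y' : ℝ → E} (hy : ∀ t, HasDerivAt y (y' t) t)
    (hK : ∀ t, ‖y' t‖ ≤ K) : LipschitzWith K y :=
  lipschitzWith_of_nnnorm_deriv_le (fun t => (hy t).differentiableAt) fun t => by
    rw [(hy t).deriv]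
    exact hK t

theorem AvgSmall.norm_windowAvg_comp_le {g : ℝ → E → E} (hg : AvgSmall r ε L T C g) {u : ℝ → E}
    (hur : ∀ t, u t ∈ closedBall 0 r) (hu : LipschitzWith K u) (t : ℝ) :
    ‖windowAvg T (fun s => g s (u s)) t‖ ≤ (L + ε) * (K * T) + ε * r := by
  refine norm_windowAvg_le_of_norm_sub_le hg.window_pos (hg.continuous_comp hu.continuous hur)
    (hg.continuous_comp continuous_const fun _ => hur t) (fun s hs => ?_)
    (hg.norm_windowAvg_le (u t) (hur t) t)
  refine (hg.norm_sub_le s (hur s) (hur t)).trans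
    (mul_le_mul_of_nonneg_left ?_ (add_nonneg hg.linearBound_nonneg ε.2))
  refine (hu.norm_sub_le s t).trans (mul_le_mul_of_nonneg_left ?_ K.2)
  exact abs_le.2 ⟨by linarith [hs.1, hg.window_pos], by linarith [hs.2]⟩

variable [CompleteSpace E]

theorem HasGreenBound.exists_isBddSol_mem_slowBall (hA : HasGreenBound A a M) (hν : 0 < ν)
    {g : ℝ → E → E} (hg : AvgSmall r ε L T C g) (hK : ν * (‖A‖ * r + C) ≤ K)
    (hr : M * ((L + ε) * (K * T) + ε * r) + ν * T * Real.exp (ν * a * T) * ((‖A‖ * M + 1) * C) ≤ r)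
    {u : ℝ →ᵇ E} (hu : u ∈ slowBall r K) :
    ∃ y : ℝ →ᵇ E, y ∈ slowBall r K ∧ IsBddSol A ν y fun t => g t (u t) := by
  have hforcing : ∀ t, ‖g t (u t)‖ ≤ C := fun t => hg.norm_le t _ (hu.1 t)
  obtain ⟨y, hy⟩ := hA.exists_isBddSol hν.ne' (hg.continuous_comp u.continuous hu.1) ⟨C, hforcing⟩
  have hω : IsExpWeight (ν * a) fun _ => 1 := .one (mul_nonneg hν.le hA.rate_pos.le)
  have hyr : ∀ t, ‖y t‖ ≤ r := fun t => by
    refine (hA.norm_le_of_norm_windowAvg_le hν hg.window_pos hy hω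
      (fun s => (hforcing s).trans_eq (mul_one _).symm)
      (fun s => (hg.norm_windowAvg_comp_le hu.1 hu.2 s).trans_eq (mul_one _).symm) t).trans ?_
    rwa [mul_one]
  refine ⟨.ofNormedAddCommGroup y hy.continuous r hyr,
    ⟨fun t => mem_closedBall_zero_iff.2 (hyr t), lipschitzWith_of_hasDerivAt hy.hasDerivAt
      fun t => ?_⟩, hy⟩
  rw [norm_smul, Real.norm_of_nonneg hν.le]
  exact (mul_le_mul_of_nonneg_left
    (norm_add_le_of_le (A.le_opNorm_of_le (hyr t)) (hforcing t)) hν.le).trans hK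

-- The solution map `Φ` need not contract, because the forcing is small only on average. `Φ ∘ Φ`
-- does: differences of values of `Φ` move slowly, so averaging applies to them.
theorem HasGreenBound.exists_fixedPoint (hA : HasGreenBound A a M) (hν : 0 < ν)
    {g : ℝ → E → E} (hg : AvgSmall r ε L T C g)
    (hstep : ∀ u : ℝ →ᵇ E, u ∈ slowBall r K → ∃ y : ℝ →ᵇ E, y ∈ slowBall r K ∧
      IsBddSol A ν y fun t => g t (u t))
    (hεL : ε * ((6 * M + 1) * M + 1) * (L + ε) ≤ 1 / 2)
    (hest : ∀ y₁ y₂ f w : ℝ → E, Continuous y₁ → Continuous y₂ → (∀ t, y₁ t ∈ closedBall 0 r) →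
      (∀ t, y₂ t ∈ closedBall 0 r) → IsBddSol A ν (y₁ - y₂) f →
      IsBddSol A ν w (fun t => g t (y₁ t) - g t (y₂ t)) → ∀ d q,
      (∀ t, ‖y₁ t - y₂ t‖ ≤ d) → (∀ t, ‖f t‖ ≤ q) → ∀ t, ‖w t‖ ≤ (6 * M + 1) * ε * d + ε * q) :
    ∃ y : ℝ → E, (∀ t, y t ∈ closedBall 0 r) ∧ IsBddSol A ν y fun t => g t (y t) := by
  have hω : IsExpWeight (ν * a) fun _ => 1 := .one (mul_nonneg hν.le hA.rate_pos.le)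
  choose Φ hΦ hsol using fun u : slowBall (E := E) r K => hstep u u.2
  let Ψ : slowBall (E := E) r K → slowBall (E := E) r K := fun u => ⟨Φ u, hΦ u⟩
  have hcontract : ContractingWith (1 / 2) Ψ^[2] := by
    refine ⟨by rw [← NNReal.coe_lt_coe]; norm_num, LipschitzWith.of_dist_le_mul fun u v => ?_⟩
    refine (BoundedContinuousFunction.dist_le (by positivity)).2 fun t => ?_
    have hforcing : ∀ s, ‖g s (u.1 s) - g s (v.1 s)‖ ≤ (L + ε) * dist u v := fun s =>
      (hg.norm_sub_le s (u.2.1 s) (v.2.1 s)).trans (mul_le_mul_of_nonneg_left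
        (by rw [← dist_eq_norm]; exact BoundedContinuousFunction.dist_coe_le_dist s)
        (add_nonneg hg.linearBound_nonneg ε.2))
    have hdist : ∀ s, ‖Φ u s - Φ v s‖ ≤ M * ((L + ε) * dist u v) := fun s => by
      simpa only [mul_one, Pi.sub_apply] using hA.norm_le hν ((hsol u).sub (hsol v)) hω
        (fun s => (hforcing s).trans_eq (mul_one _).symm) s
    rw [dist_eq_norm]
    calc ‖Φ (Ψ u) t - Φ (Ψ v) t‖
        ≤ (6 * M + 1) * ε * (M * ((L + ε) * dist u v)) + ε * ((L + ε) * dist u v) :=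
          hest _ _ _ _ (Φ u).continuous (Φ v).continuous (hΦ u).1 (hΦ v).1 ((hsol u).sub (hsol v))
            ((hsol (Ψ u)).sub (hsol (Ψ v))) _ _ hdist hforcing t
      _ = ε * ((6 * M + 1) * M + 1) * (L + ε) * dist u v := by ring
      _ ≤ 1 / 2 * dist u v := by gcongr
      _ = _ := by norm_num
  have : CompleteSpace (slowBall (E := E) r K) := isClosed_slowBall.completeSpace_coe
  have : Nonempty (slowBall (E := E) r K) := ⟨0, zero_mem_slowBall hg.radius_pos.le⟩
  set y := hcontract.fixedPoint Ψ^[2]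
  have hfix : Φ y = y := congrArg Subtype.val hcontract.isFixedPt_fixedPoint_iterate
  exact ⟨y.1, y.2.1, hfix ▸ hsol y⟩

theorem HasGreenBound.eventually_exists_isBddSol (hA : HasGreenBound A a M) (hε : 0 < ε)
    (r L T C : ℝ) (hMε : M * ε < 1) (hεL : ε * ((6 * M + 1) * M + 1) * (L + ε) ≤ 1 / 2) :
    ∀ᶠ ν in 𝓝[>] 0, ∀ g : ℝ → E → E, AvgSmall r ε L T C g →
      ∃ y : ℝ → E, (∀ t, y t ∈ closedBall 0 r) ∧ IsBddSol A ν y fun t => g t (y t) := by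
  by_cases hr : 0 < r
  swap
  · exact .of_forall fun ν g hg => absurd hg.radius_pos hr
  have hinvariant : ∀ᶠ ν in 𝓝[>] 0, M * ((L + ε) * (ν * (‖A‖ * r + C) * T) + ε * r) +
      ν * T * Real.exp (ν * a * T) * ((‖A‖ * M + 1) * C) < r :=
    eventually_lt_nhdsGT_zero_of_continuous (by fun_prop) (by
      simpa [← mul_assoc] using mul_lt_of_lt_one_left hr hMε)
  filter_upwards [self_mem_nhdsWithin, hinvariant, hA.eventually_norm_le_of_avgSmall hε r L T C]
    with ν (hν : 0 < ν) hinv hest g hg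
  have hC : 0 ≤ C := (norm_nonneg _).trans (hg.norm_le 0 0 (mem_closedBall_self hr.le))
  lift ν * (‖A‖ * r + C) to ℝ≥0 using by positivity with K hK
  refine hA.exists_fixedPoint hν hg
    (fun _ hu => hA.exists_isBddSol_mem_slowBall hν hg hK.ge hinv.le hu) hεL ?_
  intro y₁ y₂ f w hy₁ hy₂ hr₁ hr₂ hsub hw d q hd hq t
  simpa using hest g hg _ (.one (mul_nonneg hν.le hA.rate_pos.le)) y₁ y₂ f w 0 hy₁ hy₂ hr₁ hr₂ hsub
    (by simpa using hw) d q 0 (by simpa using hd) (by simpa using hq) (by simp) t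

end FixedPoint

section Stability

theorem eventually_forall_norm_sub_le {E : Type*} [NormedAddCommGroup E] {S : Set E} {N : Set ℝ}
    {ν : ℝ} {f : ℝ → E → ℝ → E}
    (huc : UniformContinuousOn (fun p : ℝ × E × ℝ => f p.1 p.2.1 p.2.2) (Set.univ ×ˢ S ×ˢ N))
    (hν : ν ∈ N) {η : ℝ} (hη : 0 < η) :
    ∀ᶠ ν' in 𝓝[N] ν, ∀ t, ∀ v ∈ S, ‖f t v ν' - f t v ν‖ ≤ η := by
  obtain ⟨δ, hδ, hfδ⟩ := Metric.uniformContinuousOn_iff.1 huc η hη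
  filter_upwards [self_mem_nhdsWithin, nhdsWithin_le_nhds (ball_mem_nhds ν hδ)]
    with ν' hν' hνδ t v hv
  rw [← dist_eq_norm]
  exact (hfδ (t, v, ν') ⟨trivial, hv, hν'⟩ (t, v, ν) ⟨trivial, hv, hν⟩
    (by simpa [Prod.dist_eq, hδ] using hνδ)).le

variable {E : Type*} [NormedAddCommGroup E] [NormedSpace ℝ E] {b K C ν ν₀ : ℝ}
  {F : ℝ → E → E} {S : Set E} {x x₁ x₂ : ℝ → E}

/-- Solutions of `x' = ν F(t, x)` on the line with values in `S` are stable under perturbation of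
the equation: an error `e` in `F` changes the solution at time `t` by at most `K` times the size of
`e`, errors at distance `d` from `t` being discounted by `exp (-b * d)`. -/
structure IsExpStable (ν : ℝ) (F : ℝ → E → E) (S : Set E) (b K : ℝ) : Prop where
  rate_pos : 0 < b
  norm_sub_le : ∀ x₁ x₂ e : ℝ → E, (∀ t, x₁ t ∈ S) → (∀ t, x₂ t ∈ S) → Continuous e →
    (∃ c, ∀ t, ‖e t‖ ≤ c) → (∀ t, HasDerivAt x₁ (ν • (F t (x₁ t) + e t)) t) →
    (∀ t, HasDerivAt x₂ (ν • F t (x₂ t)) t) →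
    ∀ η t, (∀ s, ‖e s‖ ≤ η * Real.exp (b * |s - t|)) → ‖x₁ t - x₂ t‖ ≤ K * η

namespace IsExpStable

theorem eq (hF : IsExpStable ν F S b K) (hS₁ : ∀ t, x₁ t ∈ S) (hS₂ : ∀ t, x₂ t ∈ S)
    (hx₁ : ∀ t, HasDerivAt x₁ (ν • F t (x₁ t)) t) (hx₂ : ∀ t, HasDerivAt x₂ (ν • F t (x₂ t)) t) :
    x₁ = x₂ := by
  funext t
  have h := hF.norm_sub_le x₁ x₂ 0 hS₁ hS₂ continuous_zero ⟨0, fun _ => norm_zero.le⟩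
    (by simpa using hx₁) hx₂ 0 t (by simp)
  rwa [mul_zero, norm_le_zero_iff, sub_eq_zero] at h

theorem rap (hF : IsExpStable ν F S b K) (hS : Bornology.IsBounded S)
    (hcont : ContinuousOn (fun p : ℝ × E => F p.1 p.2) (Set.univ ×ˢ S))
    (hC : ∀ t, ∀ v ∈ S, ‖F t v‖ ≤ C)
    (hrel : ∀ ε > 0, RelativelyDense
      {τ | ∀ᶠ t in cocompact ℝ, ∀ v ∈ S, ‖F (t + τ) v - F t v‖ ≤ ε})
    (hxS : ∀ t, x t ∈ S) (hx : ∀ t, HasDerivAt x (ν • F t (x t)) t) : RAP x := by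
  have hC₀ : 0 ≤ C := (norm_nonneg _).trans (hC 0 _ (hxS 0))
  have hlip : LipschitzWith (‖ν‖₊ * C.toNNReal) x := lipschitzWith_of_hasDerivAt hx fun t => by
    rw [norm_smul, NNReal.coe_mul, Real.coe_toNNReal _ hC₀, coe_nnnorm]
    exact mul_le_mul_of_nonneg_left (hC t _ (hxS t)) (norm_nonneg ν)
  obtain ⟨R, hR⟩ := hS.exists_norm_le
  refine .of_eventually_norm_sub_le ⟨R, fun t => hR _ (hxS t)⟩ hlip.uniformContinuous
    fun ε hε => ?_
  obtain ⟨η, hη, hηε⟩ := exists_pos_mul_lt hε K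
  refine (hrel _ hη).mono fun τ hτ => ?_
  set e : ℝ → E := fun t => F (t + τ) (x (t + τ)) - F t (x (t + τ))
  have hshift : Continuous fun t => x (t + τ) := hlip.continuous.comp (continuous_add_const τ)
  have he : Continuous e :=
    (hcont.comp_continuous ((continuous_add_const τ).prodMk hshift) fun t => ⟨trivial, hxS _⟩).sub
      (hcont.comp_continuous (continuous_id.prodMk hshift) fun t => ⟨trivial, hxS _⟩)
  have hebdd : ∀ t, ‖e t‖ ≤ C + C := fun t =>
    norm_sub_le_of_le (hC _ _ (hxS _)) (hC _ _ (hxS _))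
  have hesmall : ∀ᶠ t in cocompact ℝ, ‖e t‖ ≤ η :=
    hτ.mono fun t ht => ht _ (hxS _)
  filter_upwards [eventually_forall_le_mul_exp_abs_sub hF.rate_pos hη hebdd hesmall] with t ht
  exact (hF.norm_sub_le (fun t => x (t + τ)) x e (fun _ => hxS _) hxS he ⟨_, hebdd⟩
    (fun s => by simpa only [e, add_sub_cancel] using (hx (s + τ)).comp_add_const s τ) hx η t
    ht).trans hηε.le

theorem norm_sub_le_of_speed (hF : IsExpStable ν F S b K) (hν : 0 < ν) {ν' δ η : ℝ} {G : ℝ → E → E}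
    (hFcont : ContinuousOn (fun p : ℝ × E => F p.1 p.2) (Set.univ ×ˢ S))
    (hGcont : ContinuousOn (fun p : ℝ × E => G p.1 p.2) (Set.univ ×ˢ S))
    (hC : ∀ t, ∀ v ∈ S, ‖G t v‖ ≤ C) (hδ : ∀ t, ∀ v ∈ S, ‖G t v - F t v‖ ≤ δ)
    (hS₁ : ∀ t, x₁ t ∈ S) (hS₂ : ∀ t, x₂ t ∈ S) (hx₁ : ∀ t, HasDerivAt x₁ (ν' • G t (x₁ t)) t)
    (hx₂ : ∀ t, HasDerivAt x₂ (ν • F t (x₂ t)) t)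
    (hη : |ν' / ν - 1| * C + δ ≤ η) (t : ℝ) : ‖x₁ t - x₂ t‖ ≤ K * η := by
  set e : ℝ → E := fun t => (ν' / ν - 1) • G t (x₁ t) + (G t (x₁ t) - F t (x₁ t))
  have hx₁cont : Continuous x₁ := continuous_iff_continuousAt.2 fun t => (hx₁ t).continuousAt
  have hcomp : ∀ {H : ℝ → E → E}, ContinuousOn (fun p : ℝ × E => H p.1 p.2) (Set.univ ×ˢ S) →
      Continuous fun t => H t (x₁ t) := fun hH =>
    hH.comp_continuous (continuous_id.prodMk hx₁cont) fun t => ⟨trivial, hS₁ t⟩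
  have hebdd : ∀ t, ‖e t‖ ≤ η := fun t => by
    refine (norm_add_le_of_le ?_ (hδ t _ (hS₁ t))).trans hη
    rw [norm_smul, Real.norm_eq_abs]
    exact mul_le_mul_of_nonneg_left (hC t _ (hS₁ t)) (abs_nonneg _)
  refine hF.norm_sub_le x₁ x₂ e hS₁ hS₂
    (((hcomp hGcont).const_smul _).add ((hcomp hGcont).sub (hcomp hFcont))) ⟨_, hebdd⟩
    (fun s => (hx₁ s).congr_deriv ?_) hx₂ _ t fun s => (hebdd s).trans <| le_mul_of_one_le_right
      ((norm_nonneg _).trans (hebdd s)) <|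
        Real.one_le_exp (mul_nonneg hF.rate_pos.le (abs_nonneg _))
  simp only [e, sub_smul, one_smul, sub_add_sub_cancel, add_sub_cancel, smul_smul,
    mul_div_cancel₀ _ hν.ne']

end IsExpStable

theorem continuousOn_of_isExpStable {f : ℝ → E → ℝ → E} {N : Set ℝ} (hN : N ⊆ Set.Ioc 0 ν₀)
    {b : ℝ → ℝ} (hf : ∀ ν ∈ N, IsExpStable ν (fun t v => f t v ν) S (b ν) K)
    (huc : UniformContinuousOn (fun p : ℝ × E × ℝ => f p.1 p.2.1 p.2.2) (Set.univ ×ˢ S ×ˢ N))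
    (hC : ∀ t, ∀ v ∈ S, ∀ ν ∈ N, ‖f t v ν‖ ≤ C) {φ : ℝ → ℝ → E} (hφS : ∀ ν ∈ N, ∀ t, φ ν t ∈ S)
    (hφ : ∀ ν ∈ N, ∀ t, HasDerivAt (φ ν) (ν • f t (φ ν t) ν) t) :
    ContinuousOn (fun p : ℝ × ℝ => φ p.2 p.1) (Set.univ ×ˢ N) := by
  have hlip : ∀ ν ∈ N, LipschitzWith (ν₀ * C).toNNReal (φ ν) := fun ν hν => by
    refine lipschitzWith_of_hasDerivAt (hφ ν hν) fun t => ?_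
    have hft := hC t _ (hφS ν hν t) ν hν
    rw [norm_smul, Real.norm_of_nonneg (hN hν).1.le]
    exact (mul_le_mul (hN hν).2 hft (norm_nonneg _) ((hN hν).1.le.trans (hN hν).2)).trans
      (Real.le_coe_toNNReal _)
  have hcont : ∀ ν ∈ N, ContinuousOn (fun p : ℝ × E => f p.1 p.2 ν) (Set.univ ×ˢ S) :=
    fun ν hν => huc.continuousOn.comp (f := fun p : ℝ × E => (p.1, p.2, ν)) (by fun_prop)
      fun p hp => ⟨trivial, hp.2, hν⟩
  refine continuousOn_prod_of_continuousOn_lipschitzOnWith _ (ν₀ * C).toNNReal (fun t _ ν hν => ?_)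
    fun ν hν => (hlip ν hν).lipschitzOnWith
  refine Metric.tendsto_nhds.2 fun ε hε => ?_
  obtain ⟨η, hη, hηε⟩ := exists_pos_mul_lt hε K
  have hspeed : ∀ᶠ ν' in 𝓝[N] ν, |ν' / ν - 1| * C < η / 2 := by
    have hlim : ContinuousAt (fun ν' => |ν' / ν - 1| * C) ν := by fun_prop
    refine nhdsWithin_le_nhds (hlim.eventually_lt continuousAt_const ?_)
    rw [div_self (hN hν).1.ne', sub_self, abs_zero, zero_mul]
    exact half_pos hη
  filter_upwards [self_mem_nhdsWithin, hspeed,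
    eventually_forall_norm_sub_le huc hν (half_pos hη)] with ν' hν' hν'speed hclose
  rw [dist_eq_norm]
  have hη' : |ν' / ν - 1| * C + η / 2 ≤ η := by linarith
  exact ((hf ν hν).norm_sub_le_of_speed (hN hν).1 (hcont ν hν) (hcont ν' hν')
    (fun s v hv => hC s v hv ν' hν') hclose (hφS ν' hν') (hφS ν hν) (hφ ν' hν') (hφ ν hν)
    hη' t).trans_lt hηε

end Stability

section HyperbolicEquilibrium

variable {E : Type*} [NormedAddCommGroup E] [NormedSpace ℝ E] {A : E →L[ℝ] E} {a M r L T C : ℝ}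
  {ε : ℝ≥0} {x₀ : E} {F : ℝ → E → E}

theorem AvgSmall.isBddSol_sub {ν : ℝ} {x e : ℝ → E}
    (hF : AvgSmall r ε L T C fun t v => F t (x₀ + v) - A v)
    (hxr : ∀ t, x t ∈ closedBall x₀ r) (he : Continuous e) (hbdd : ∃ c, ∀ t, ‖e t‖ ≤ c)
    (hx : ∀ t, HasDerivAt x (ν • (F t (x t) + e t)) t) :
    IsBddSol A ν (fun t => x t - x₀)
      fun t => F t (x₀ + (x t - x₀)) - A (x t - x₀) + e t := by
  have hball : ∀ t, x t - x₀ ∈ closedBall 0 r := fun t => by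
    rw [mem_closedBall_zero_iff, ← mem_closedBall_iff_norm]
    exact hxr t
  have hxcont : Continuous x := continuous_iff_continuousAt.2 fun t => (hx t).continuousAt
  exact {
    hasDerivAt := fun t => ((hx t).sub_const x₀).congr_deriv <| by
      rw [add_sub_cancel, ← add_assoc, add_sub_cancel]
    continuous_forcing := (hF.continuous_comp (hxcont.sub continuous_const) hball).add he
    bdd_forcing := let ⟨c, hc⟩ := hbdd
      ⟨C + c, fun t => norm_add_le_of_le (hF.norm_le t _ (hball t)) (hc t)⟩
    bdd := ⟨r, fun t => mem_closedBall_zero_iff.1 (hball t)⟩ }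

section

variable [CompleteSpace E]

theorem HasGreenBound.eventually_isExpStable (hA : HasGreenBound A a M) (hε : 0 < ε) (r T C : ℝ)
    (hεL : ε * (6 * M + 1 + (L + ε)) ≤ 1 / 2) (x₀ : E) :
    ∀ᶠ ν in 𝓝[>] 0, ∀ F : ℝ → E → E, AvgSmall r ε L T C (fun t v => F t (x₀ + v) - A v) →
      IsExpStable ν F (closedBall x₀ r) (ν * a) (2 * (M + 1 + ε)) := by
  filter_upwards [self_mem_nhdsWithin, hA.eventually_norm_sub_le hε r T C hεL]
    with ν (hν : 0 < ν) hstable F hF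
  refine ⟨mul_pos hν hA.rate_pos, fun x₁ x₂ e hr₁ hr₂ he hbdd hx₁ hx₂ η t hη => ?_⟩
  have hy₁ := hF.isBddSol_sub hr₁ he hbdd hx₁
  have hy₂ := hF.isBddSol_sub hr₂ (e := 0) continuous_zero ⟨0, fun _ => norm_zero.le⟩
    (by simpa using hx₂)
  have hball : ∀ {v}, v ∈ closedBall x₀ r → v - x₀ ∈ closedBall 0 r := fun hv => by
    rwa [mem_closedBall_zero_iff, ← mem_closedBall_iff_norm]
  simpa using hstable _ hF _ _ e (fun s => hball (hr₁ s)) (fun s => hball (hr₂ s)) hy₁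
    (by simpa using hy₂) η t hη

theorem HasGreenBound.eventually_exists_hasDerivAt (hA : HasGreenBound A a M) (hε : 0 < ε)
    (r L T C : ℝ) (hMε : M * ε < 1) (hεL : ε * ((6 * M + 1) * M + 1) * (L + ε) ≤ 1 / 2) (x₀ : E) :
    ∀ᶠ ν in 𝓝[>] (0 : ℝ), ∀ F : ℝ → E → E, AvgSmall r ε L T C (fun t v => F t (x₀ + v) - A v) →
      ∃ x : ℝ → E, (∀ t, x t ∈ closedBall x₀ r) ∧ ∀ t, HasDerivAt x (ν • F t (x t)) t := by
  filter_upwards [hA.eventually_exists_isBddSol hε r L T C hMε hεL] with ν hsol F hF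
  obtain ⟨y, hyr, hy⟩ := hsol _ hF
  refine ⟨fun t => x₀ + y t, fun t => ?_, fun t => ?_⟩
  · simpa using hyr t
  · simpa using (hy.hasDerivAt t).const_add x₀

end

theorem exists_pos_perturbation_bounds (M L : ℝ) :
    ∃ ε : ℝ≥0, 0 < ε ∧ ε * (6 * M + 1 + (L + ε)) ≤ 1 / 2 ∧ M * ε < 1 ∧
      ε * ((6 * M + 1) * M + 1) * (L + ε) ≤ 1 / 2 := by
  have hstable : ∀ᶠ ε in 𝓝[>] (0 : ℝ), ε * (6 * M + 1 + (L + ε)) < 1 / 2 :=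
    eventually_lt_nhdsGT_zero_of_continuous (by fun_prop) (by simp)
  have hself : ∀ᶠ ε in 𝓝[>] (0 : ℝ), M * ε < 1 :=
    eventually_lt_nhdsGT_zero_of_continuous (by fun_prop) (by simp)
  have hcontract : ∀ᶠ ε in 𝓝[>] (0 : ℝ), ε * ((6 * M + 1) * M + 1) * (L + ε) < 1 / 2 :=
    eventually_lt_nhdsGT_zero_of_continuous (by fun_prop) (by simp)
  obtain ⟨ε, hε, hstable, hself, hcontract⟩ :=
    (eventually_mem_nhdsWithin.and (hstable.and (hself.and hcontract))).exists
  exact ⟨⟨ε, hε.le⟩, hε, hstable.le, hself, hcontract.le⟩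

theorem norm_le_of_approximatesLinearOn {E F : Type*} [NormedAddCommGroup E] [NormedSpace ℝ E]
    [NormedAddCommGroup F] [NormedSpace ℝ F] {h : E → F} {D : E →L[ℝ] F} {x₀ : E} {ρ C : ℝ}
    {c : ℝ≥0} (hρ : 0 < ρ) (hD : ApproximatesLinearOn h D (closedBall x₀ ρ) c)
    (hC : ∀ x ∈ closedBall x₀ ρ, ‖h x‖ ≤ C) : ‖D‖ ≤ 2 * C / ρ + c := by
  have hx₀ : x₀ ∈ closedBall x₀ ρ := mem_closedBall_self hρ.le
  have hC₀ : 0 ≤ C := (norm_nonneg _).trans (hC x₀ hx₀)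
  refine D.opNorm_le_of_unit_norm (by positivity) fun v hv => ?_
  have hnorm : ‖ρ • v‖ = ρ := by rw [norm_smul, hv, mul_one, Real.norm_of_nonneg hρ.le]
  have hxv : x₀ + ρ • v ∈ closedBall x₀ ρ := by simp [hnorm]
  have happrox := hD _ hxv _ hx₀
  rw [add_sub_cancel_left, hnorm] at happrox
  have hDv : ρ * ‖D v‖ ≤ C + C + c * ρ := by
    calc ρ * ‖D v‖ = ‖D (ρ • v)‖ := by rw [map_smul, norm_smul, Real.norm_of_nonneg hρ.le]
      _ ≤ ‖h (x₀ + ρ • v) - h x₀‖ + ‖h (x₀ + ρ • v) - h x₀ - D (ρ • v)‖ :=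
        norm_le_norm_add_norm_sub _ _
      _ ≤ C + C + c * ρ :=
        add_le_add (norm_sub_le_of_le (hC _ hxv) (hC _ hx₀)) happrox
  rw [← sub_le_iff_le_add, le_div_iff₀ hρ]
  linarith

theorem eventually_approximatesLinearOn_closedBall {ι E F : Type*} [NormedAddCommGroup E]
    [NormedSpace ℝ E] [NormedAddCommGroup F] [NormedSpace ℝ F] {h : ι → E → F} {U : Set E} {x₀ : E}
    (hU : U ∈ 𝓝 x₀) (hdiff : ∀ i, ∀ x ∈ U, DifferentiableAt ℝ (h i) x) {c : ℝ≥0}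
    (hcont : ∃ δ > 0, ∀ i, ∀ x ∈ U, ‖x - x₀‖ < δ → ‖fderiv ℝ (h i) x - fderiv ℝ (h i) x₀‖ ≤ c) :
    ∀ᶠ ρ in 𝓝[>] (0 : ℝ), ∀ i,
      ApproximatesLinearOn (h i) (fderiv ℝ (h i) x₀) (closedBall x₀ ρ) c := by
  obtain ⟨δ, hδ, hcont⟩ := hcont
  refine nhdsWithin_le_nhds ?_
  filter_upwards [eventually_closedBall_subset hU, Iio_mem_nhds hδ] with ρ hρU hρδ i x hx y hy
  exact (convex_closedBall x₀ ρ).norm_image_sub_le_of_norm_fderiv_le'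
    (fun z hz => hdiff i z (hρU hz))
    (fun z hz => hcont i z (hρU hz) ((mem_closedBall_iff_norm.1 hz).trans_lt hρδ)) hy hx

theorem exists_forall_norm_fderiv_le {ι E F : Type*} [NormedAddCommGroup E] [NormedSpace ℝ E]
    [NormedAddCommGroup F] [NormedSpace ℝ F] {h : ι → E → F} {S U : Set E} {x₀ : E} (hS : S ∈ 𝓝 x₀)
    (hU : U ∈ 𝓝 x₀) (hbdd : ∃ C, ∀ i, ∀ x ∈ S, ‖h i x‖ ≤ C)
    (hdiff : ∀ i, ∀ x ∈ U, DifferentiableAt ℝ (h i) x) {c : ℝ≥0}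
    (hcont : ∃ δ > 0, ∀ i, ∀ x ∈ U, ‖x - x₀‖ < δ → ‖fderiv ℝ (h i) x - fderiv ℝ (h i) x₀‖ ≤ c) :
    ∃ L, ∀ i, ‖fderiv ℝ (h i) x₀‖ ≤ L := by
  obtain ⟨C, hC⟩ := hbdd
  obtain ⟨ρ, hρ, hρS, hρh⟩ := (eventually_mem_nhdsWithin.and
    (((eventually_closedBall_subset hS).filter_mono nhdsWithin_le_nhds).and
      (eventually_approximatesLinearOn_closedBall hU hdiff hcont))).exists
  exact ⟨2 * C / ρ + c, fun i =>
    norm_le_of_approximatesLinearOn hρ (hρh i) fun x hx => hC i x (hρS hx)⟩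

/-- `f₀` is the average of `f` over time, uniformly on `S` and uniformly in the centre of the
averaging interval. -/
def HasUniformAverage (f : ℝ → E → E) (f₀ : E → E) (S : Set E) : Prop :=
  ∀ ε > 0, ∃ T₀ > 0, ∀ T ≥ T₀, ∀ s : ℝ, ∀ x ∈ S,
    ‖(1 / (2 * T)) • (∫ t in -T..T, f (t + s) x) - f₀ x‖ ≤ ε

theorem HasUniformAverage.exists_norm_windowAvg_sub_le {f : ℝ → E → E} {f₀ : E → E} {S : Set E}
    (hf : HasUniformAverage f f₀ S) {η : ℝ} (hη : 0 < η) :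
    ∃ T > 0, ∀ x ∈ S, ∀ t, ‖windowAvg T (fun s => f s x) t - f₀ x‖ ≤ η := by
  obtain ⟨T₀, hT₀, h⟩ := hf η hη
  refine ⟨2 * T₀, by positivity, fun x hx t => ?_⟩
  have hcentred := h T₀ le_rfl (t + T₀) x hx
  rw [intervalIntegral.integral_comp_add_right (fun s => f s x)] at hcentred
  convert hcentred using 3
  rw [windowAvg, one_div]
  congr 2 <;> ring

theorem AvgSmall.of_approximatesLinearOn [CompleteSpace E] (hr : 0 < r) (hT : 0 < T)
    (hcont : ContinuousOn (fun p : ℝ × E => F p.1 p.2) (Set.univ ×ˢ closedBall x₀ r))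
    (hC : ∀ t, ∀ x ∈ closedBall x₀ r, ‖F t x‖ ≤ C)
    (happrox : ∀ t, ∃ D : E →L[ℝ] E, ‖D‖ ≤ L ∧ ApproximatesLinearOn (F t) D (closedBall x₀ r) ε)
    (havg : ∀ x ∈ closedBall x₀ r, ∀ t,
      ‖windowAvg T (fun s => F s x) t - A (x - x₀)‖ ≤ ε * r) :
    AvgSmall r ε (L + ‖A‖) T (C + ‖A‖ * r) fun t v => F t (x₀ + v) - A v := by
  have hball : ∀ v ∈ closedBall (0 : E) r, x₀ + v ∈ closedBall x₀ r := fun v hv => by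
    simpa using hv
  refine ⟨hr, hT, ?_, fun t v hv => ?_, fun t => ?_, fun v hv t => ?_⟩
  · refine .sub (hcont.comp (f := fun p : ℝ × E => (p.1, x₀ + p.2)) (by fun_prop)
      fun p hp => ⟨trivial, hball _ hp.2⟩) (by fun_prop)
  · exact norm_sub_le_of_le (hC t _ (hball v hv))
      (A.le_opNorm_of_le (mem_closedBall_zero_iff.1 hv))
  · obtain ⟨D, hD, hFD⟩ := happrox t
    refine ⟨D - A, norm_sub_le_of_le hD le_rfl, fun u hu v hv => ?_⟩
    have h := hFD _ (hball u hu) _ (hball v hv)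
    rw [add_sub_add_left_eq_sub] at h
    convert h using 2
    simp only [sub_apply, map_sub]
    abel
  · have hconst : Continuous fun s => F s (x₀ + v) :=
      hcont.comp_continuous (f := fun s : ℝ => (s, x₀ + v)) (by fun_prop) fun s =>
        ⟨trivial, hball v hv⟩
    rw [windowAvg_sub hconst continuous_const, windowAvg_const hT.ne']
    simpa using havg _ (hball v hv) t

end HyperbolicEquilibrium

section SlowEquation

variable {E : Type*} [NormedAddCommGroup E] [NormedSpace ℝ E] {A : E →L[ℝ] E} {a M νbar : ℝ}
  {f : ℝ → E → ℝ → E} {f₀ : E → E} {S U : Set E} {x₀ : E}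

theorem HasUniformAverage.eventually_norm_windowAvg_sub_le
    (havg : HasUniformAverage (fun t x => f t x 0) f₀ S) (hνbar : 0 < νbar)
    (huc : UniformContinuousOn (fun p : ℝ × E × ℝ => f p.1 p.2.1 p.2.2)
      (Set.univ ×ˢ S ×ˢ Set.Icc 0 νbar)) {η : ℝ} (hη : 0 < η) :
    ∃ T > 0, ∀ᶠ ν in 𝓝[>] 0, ∀ x ∈ S, ∀ t, ‖windowAvg T (fun s => f s x ν) t - f₀ x‖ ≤ η := by
  obtain ⟨T, hT, hTavg⟩ := havg.exists_norm_windowAvg_sub_le (half_pos hη)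
  have hzero : (0 : ℝ) ∈ Set.Icc 0 νbar := Set.left_mem_Icc.2 hνbar.le
  have hle : 𝓝[>] (0 : ℝ) ≤ 𝓝[Set.Icc 0 νbar] 0 := by
    rw [nhdsWithin_Icc_eq_nhdsGE hνbar]
    exact nhdsWithin_mono 0 Set.Ioi_subset_Ici_self
  refine ⟨T, hT, ?_⟩
  filter_upwards [Ioc_mem_nhdsGT hνbar, hle (eventually_forall_norm_sub_le huc hzero (half_pos hη))]
    with ν hν hclose x hx t
  have hcont : ∀ ν' ∈ Set.Icc 0 νbar, Continuous fun s => f s x ν' := fun ν' hν' =>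
    huc.continuousOn.comp_continuous (f := fun s : ℝ => (s, x, ν')) (by fun_prop)
      fun s => ⟨trivial, hx, hν'⟩
  exact (norm_windowAvg_sub_le_of_norm_sub_le hT (hcont ν (Set.Ioc_subset_Icc_self hν))
    (hcont 0 hzero) (fun s _ => hclose s x hx) (hTavg x hx t)).trans_eq (add_halves η)

theorem eventually_norm_sub_le_mul_radius (hf₀ : HasFDerivAt f₀ A x₀)
    (hzero : f₀ x₀ = 0) {c : ℝ} (hc : 0 < c) :
    ∀ᶠ r in 𝓝[>] 0, ∀ x ∈ closedBall x₀ r, ‖f₀ x - A (x - x₀)‖ ≤ c * r := by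
  obtain ⟨ρ, hρ, hball⟩ := Metric.eventually_nhds_iff_ball.1 (hf₀.isLittleO.def hc)
  filter_upwards [Ioo_mem_nhdsGT hρ] with r hr x hx
  have hx' := hball x (closedBall_subset_ball hr.2 hx)
  rw [hzero, sub_zero] at hx'
  exact hx'.trans (mul_le_mul_of_nonneg_left (mem_closedBall_iff_norm.1 hx) hc.le)

theorem exists_avgSmall [CompleteSpace E] (hνbar : 0 < νbar) (hS : S ∈ 𝓝 x₀) (hU : U ∈ 𝓝 x₀)
    (hbdd : ∃ C, ∀ t, ∀ x ∈ S, ∀ ν ∈ Set.Icc 0 νbar, ‖f t x ν‖ ≤ C)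
    (huc : UniformContinuousOn (fun p : ℝ × E × ℝ => f p.1 p.2.1 p.2.2)
      (Set.univ ×ˢ S ×ˢ Set.Icc 0 νbar))
    (hdiff : ∀ t, ∀ ν ∈ Set.Icc 0 νbar, ∀ x ∈ U, DifferentiableAt ℝ (fun y => f t y ν) x)
    (hdcont : ∀ ε > 0, ∃ δ > 0, ∀ t, ∀ ν ∈ Set.Icc 0 νbar, ∀ x ∈ U, ‖x - x₀‖ < δ →
      ‖fderiv ℝ (fun z => f t z ν) x - fderiv ℝ (fun z => f t z ν) x₀‖ ≤ ε)
    (havg : HasUniformAverage (fun t x => f t x 0) f₀ S) (hzero : f₀ x₀ = 0)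
    (hf₀ : HasFDerivAt f₀ A x₀) :
    ∃ L, ∀ ε : ℝ≥0, 0 < ε → ∃ r > 0, closedBall x₀ r ⊆ S ∧ ∃ T C, ∀ᶠ ν in 𝓝[>] 0,
      AvgSmall r ε L T C fun t v => f t (x₀ + v) ν - A v := by
  let h : ℝ × Set.Icc 0 νbar → E → E := fun i y => f i.1 y i.2
  obtain ⟨C, hC⟩ := hbdd
  have hdiff' : ∀ i, ∀ x ∈ U, DifferentiableAt ℝ (h i) x := fun i => hdiff i.1 i.2 i.2.2
  have hdcont' : ∀ ε > 0, ∃ δ > 0, ∀ i, ∀ x ∈ U, ‖x - x₀‖ < δ →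
      ‖fderiv ℝ (h i) x - fderiv ℝ (h i) x₀‖ ≤ ε := fun ε hε =>
    (hdcont ε hε).imp fun δ hδ => ⟨hδ.1, fun i => hδ.2 i.1 i.2 i.2.2⟩
  obtain ⟨L, hL⟩ := exists_forall_norm_fderiv_le (c := 1) hS hU
    ⟨C, fun i x hx => hC i.1 x hx i.2 i.2.2⟩ hdiff' (hdcont' 1 one_pos)
  refine ⟨L + ‖A‖, fun ε hε => ?_⟩
  have hε' : (0 : ℝ) < ε / 2 := half_pos (NNReal.coe_pos.2 hε)
  obtain ⟨r, hr, hrS, hrf, hrf₀⟩ := (eventually_mem_nhdsWithin.and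
    (((eventually_closedBall_subset hS).filter_mono nhdsWithin_le_nhds).and
      ((eventually_approximatesLinearOn_closedBall hU hdiff' (hdcont' ε hε)).and
        (eventually_norm_sub_le_mul_radius hf₀ hzero hε')))).exists
  obtain ⟨T, hT, hTavg⟩ := havg.eventually_norm_windowAvg_sub_le hνbar huc
    (mul_pos hε' hr)
  refine ⟨r, hr, hrS, T, C + ‖A‖ * r, ?_⟩
  filter_upwards [Ioc_mem_nhdsGT hνbar, hTavg] with ν hν hνavg
  have hνI : ν ∈ Set.Icc 0 νbar := Set.Ioc_subset_Icc_self hν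
  refine AvgSmall.of_approximatesLinearOn (F := fun t x => f t x ν) hr hT ?_
    (fun t x hx => hC t x (hrS hx) ν hνI)
    (fun t => ⟨_, hL (t, ⟨ν, hνI⟩), hrf (t, ⟨ν, hνI⟩)⟩) fun x hx t => ?_
  · exact huc.continuousOn.comp (f := fun p : ℝ × E => (p.1, p.2, ν)) (by fun_prop)
      fun p hp => ⟨trivial, hrS hp.2, hνI⟩
  · rw [← sub_add_sub_cancel _ (f₀ x)]
    exact (norm_add_le_of_le (hνavg x (hrS hx) t) (hrf₀ x hx)).trans_eq
      (by ring)

theorem HasGreenBound.exists_isExpStable [CompleteSpace E] (hA : HasGreenBound A a M)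
    (hνbar : 0 < νbar) (hS : S ∈ 𝓝 x₀) (hU : U ∈ 𝓝 x₀)
    (hbdd : ∃ C, ∀ t, ∀ x ∈ S, ∀ ν ∈ Set.Icc 0 νbar, ‖f t x ν‖ ≤ C)
    (huc : UniformContinuousOn (fun p : ℝ × E × ℝ => f p.1 p.2.1 p.2.2)
      (Set.univ ×ˢ S ×ˢ Set.Icc 0 νbar))
    (hdiff : ∀ t, ∀ ν ∈ Set.Icc 0 νbar, ∀ x ∈ U, DifferentiableAt ℝ (fun y => f t y ν) x)
    (hdcont : ∀ ε > 0, ∃ δ > 0, ∀ t, ∀ ν ∈ Set.Icc 0 νbar, ∀ x ∈ U, ‖x - x₀‖ < δ →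
      ‖fderiv ℝ (fun z => f t z ν) x - fderiv ℝ (fun z => f t z ν) x₀‖ ≤ ε)
    (havg : HasUniformAverage (fun t x => f t x 0) f₀ S) (hzero : f₀ x₀ = 0)
    (hf₀ : HasFDerivAt f₀ A x₀) :
    ∃ r > 0, closedBall x₀ r ⊆ S ∧ ∃ K, ∃ ν₀ > 0, ν₀ ≤ νbar ∧ ∀ ν ∈ Set.Ioc 0 ν₀,
      IsExpStable ν (fun t v => f t v ν) (closedBall x₀ r) (ν * a) K ∧
      ∃ x : ℝ → E, (∀ t, x t ∈ closedBall x₀ r) ∧ ∀ t, HasDerivAt x (ν • f t (x t) ν) t := by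
  obtain ⟨L, hL⟩ := exists_avgSmall hνbar hS hU hbdd huc hdiff hdcont havg hzero hf₀
  obtain ⟨ε, hε, hstable, hself, hcontract⟩ := exists_pos_perturbation_bounds M L
  obtain ⟨r, hr, hrS, T, C, hsmall⟩ := hL ε hε
  have hgood := (hsmall.and ((hA.eventually_isExpStable hε r T C hstable x₀).and
    (hA.eventually_exists_hasDerivAt hε r L T C hself hcontract x₀))).and (Ioc_mem_nhdsGT hνbar)
  obtain ⟨ν₀, hν₀, hIoc⟩ := mem_nhdsGT_iff_exists_Ioc_subset.1 hgood
  refine ⟨r, hr, hrS, 2 * (M + 1 + ε), ν₀, hν₀, (hIoc (Set.right_mem_Ioc.2 hν₀)).2.2,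
    fun ν hν => ?_⟩
  obtain ⟨⟨hνsmall, hνstable, hνsol⟩, -⟩ := hIoc hν
  exact ⟨hνstable _ hνsmall, hνsol (fun t v => f t v ν) hνsmall⟩

end SlowEquation

theorem averaging_principle_RAP_general {E : Type*} [NormedAddCommGroup E] [NormedSpace ℝ E]
    [CompleteSpace E] {νbar : ℝ} (hνbar : 0 < νbar) {f : ℝ → E → ℝ → E} {f₀ : E → E} {x₀ : E}
    {S U : Set E} (hS : S ∈ 𝓝 x₀) (hU : U ∈ 𝓝 x₀)
    (hRAP : RAPUniform (fun t (p : E × ℝ) => f t p.1 p.2) (S ×ˢ Set.Icc 0 νbar))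
    (hdiff : ∀ t, ∀ ν ∈ Set.Icc 0 νbar, ∀ x ∈ U, DifferentiableAt ℝ (fun y => f t y ν) x)
    (hdcont : ∀ ε > 0, ∃ δ > 0, ∀ t, ∀ ν ∈ Set.Icc 0 νbar, ∀ x ∈ U, ‖x - x₀‖ < δ →
      ‖fderiv ℝ (fun z => f t z ν) x - fderiv ℝ (fun z => f t z ν) x₀‖ ≤ ε)
    (havg : HasUniformAverage (fun t x => f t x 0) f₀ S) (hzero : f₀ x₀ = 0)
    {A : E →L[ℝ] E} (hf₀ : HasFDerivAt f₀ A x₀) {a M : ℝ} (hA : HasGreenBound A a M) :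
    ∃ r₀ > 0, ∃ ν₀ > 0, ν₀ ≤ νbar ∧ ∃ φ : ℝ → ℝ → E,
      ContinuousOn (fun p : ℝ × ℝ => φ p.2 p.1) (Set.univ ×ˢ Set.Ioc 0 ν₀) ∧
      ∀ ν ∈ Set.Ioc 0 ν₀,
        (RAP (φ ν) ∧ (∀ t, HasDerivAt (φ ν) (ν • f t (φ ν t) ν) t) ∧ ∀ t, ‖φ ν t - x₀‖ ≤ r₀) ∧
        ∀ ψ : ℝ → E, (∀ t, HasDerivAt ψ (ν • f t (ψ t) ν) t) → (∀ t, ‖ψ t - x₀‖ ≤ r₀) →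
          ψ = φ ν := by
  have huc := hRAP.2.1
  obtain ⟨C, hC⟩ := hRAP.1
  have hC' : ∀ t, ∀ x ∈ S, ∀ ν ∈ Set.Icc 0 νbar, ‖f t x ν‖ ≤ C := fun t x hx ν hν =>
    hC t (x, ν) ⟨hx, hν⟩
  obtain ⟨r₀, hr₀, hrS, K, ν₀, hν₀, hν₀bar, hν₀sol⟩ := hA.exists_isExpStable hνbar hS hU ⟨C, hC'⟩
    huc hdiff hdcont havg hzero hf₀
  have hsub : Set.Ioc 0 ν₀ ⊆ Set.Icc 0 νbar := fun ν hν => ⟨hν.1.le, hν.2.trans hν₀bar⟩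
  choose! hstable φ hφr hφ using hν₀sol
  refine ⟨r₀, hr₀, ν₀, hν₀, hν₀bar, φ, continuousOn_of_isExpStable subset_rfl hstable
    (huc.mono (Set.prod_mono_right (Set.prod_mono hrS hsub)))
    (fun t v hv ν hν => hC' t v (hrS hv) ν (hsub hν)) hφr hφ, fun ν hν => ⟨⟨?_, hφ ν hν, fun t =>
      mem_closedBall_iff_norm.1 (hφr ν hν t)⟩, fun ψ hψ hψr => (hstable ν hν).eq
        (fun t => mem_closedBall_iff_norm.2 (hψr t)) (hφr ν hν) hψ (hφ ν hν)⟩⟩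
  refine (hstable ν hν).rap isBounded_closedBall
    (huc.continuousOn.comp (f := fun p : ℝ × E => (p.1, p.2, ν)) (by fun_prop)
      fun p hp => ⟨trivial, hrS hp.2, hsub hν⟩) (fun t v hv => hC' t v (hrS hv) ν (hsub hν))
    (fun ε hε => (hRAP.relativelyDense_eventually hε).mono fun τ hτ => ?_) (hφr ν hν) (hφ ν hν)
  exact hτ.mono fun t ht v hv => ht (v, ν) ⟨hrS hv, hsub hν⟩

/-- Theorem 3.5: averaging principle — unique RAP solution of
`x' = ν f_ν(t,x)` near a hyperbolic zero `x₀` of the averaged field `f₀`. -/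
theorem averaging_principle_RAP {n : ℕ} (r₁ νbar : ℝ)
    (hr₁ : 0 < r₁) (hνbar : 0 < νbar)
    (f : ℝ → EuclideanSpace ℝ (Fin n) → ℝ → EuclideanSpace ℝ (Fin n))
    (f₀ : EuclideanSpace ℝ (Fin n) → EuclideanSpace ℝ (Fin n))
    (hcont : ContinuousOn
      (fun p : ℝ × EuclideanSpace ℝ (Fin n) × ℝ => f p.1 p.2.1 p.2.2)
      (Set.univ ×ˢ Metric.closedBall 0 r₁ ×ˢ Set.Icc 0 νbar))
    (hRAP : RAPUniform (fun t (p : EuclideanSpace ℝ (Fin n) × ℝ) => f t p.1 p.2)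
      (Metric.closedBall 0 r₁ ×ˢ Set.Icc 0 νbar))
    (hdiff : ∀ t : ℝ, ∀ ν ∈ Set.Icc (0:ℝ) νbar,
      ∀ x ∈ Metric.ball (0 : EuclideanSpace ℝ (Fin n)) r₁,
      DifferentiableAt ℝ (fun y => f t y ν) x)
    (hdcont : ∀ ε > 0, ∃ δ > 0, ∀ t : ℝ, ∀ ν ∈ Set.Icc (0:ℝ) νbar,
      ∀ x ∈ Metric.ball (0 : EuclideanSpace ℝ (Fin n)) r₁,
      ∀ y ∈ Metric.ball (0 : EuclideanSpace ℝ (Fin n)) r₁, ‖x - y‖ < δ →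
      ‖fderiv ℝ (fun z => f t z ν) x - fderiv ℝ (fun z => f t z ν) y‖ ≤ ε)
    (havg : ∀ ε > 0, ∃ T₀ > 0, ∀ T ≥ T₀, ∀ s : ℝ,
      ∀ x ∈ Metric.closedBall (0 : EuclideanSpace ℝ (Fin n)) r₁,
      ‖(1 / (2 * T)) • (∫ t in -T..T, f (t + s) x 0) - f₀ x‖ ≤ ε)
    (x₀ : EuclideanSpace ℝ (Fin n))
    (hx₀ : x₀ ∈ Metric.ball (0 : EuclideanSpace ℝ (Fin n)) r₁)
    (hzero : f₀ x₀ = 0)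
    (hdf₀ : DifferentiableAt ℝ f₀ x₀)
    (heig : ∀ μ : ℂ,
      (((clmToMatrix (fderiv ℝ f₀ x₀)).map (Complex.ofReal)).charpoly).IsRoot μ →
      μ.re ≠ 0) :
    ∃ r₀ > 0, ∃ ν₀ > 0, ν₀ ≤ νbar ∧
      ∃ φ : ℝ → ℝ → EuclideanSpace ℝ (Fin n),
        ContinuousOn (fun p : ℝ × ℝ => φ p.2 p.1) (Set.univ ×ˢ Set.Ioc 0 ν₀) ∧
        ∀ ν ∈ Set.Ioc (0:ℝ) ν₀,
          (RAP (φ ν) ∧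
            (∀ t, HasDerivAt (φ ν) (ν • f t (φ ν t) ν) t) ∧
            ∀ t, ‖φ ν t - x₀‖ ≤ r₀) ∧
          ∀ ψ : ℝ → EuclideanSpace ℝ (Fin n), RAP ψ →
            (∀ t, HasDerivAt ψ (ν • f t (ψ t) ν) t) →
            (∀ t, ‖ψ t - x₀‖ ≤ r₀) → ψ = φ ν := by
  obtain ⟨a, M, hA⟩ := exists_hasGreenBound_of_charpoly (fderiv ℝ f₀ x₀) heig
  obtain ⟨r₀, hr₀, ν₀, hν₀, hν₀bar, φ, hφcont, hφ⟩ := averaging_principle_RAP_general hνbar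
    (closedBall_mem_nhds_of_mem hx₀) (isOpen_ball.mem_nhds hx₀) hRAP hdiff
    (fun ε hε => (hdcont ε hε).imp fun δ h => ⟨h.1, fun t ν hν x hx => h.2 t ν hν x hx x₀ hx₀⟩)
    havg hzero hdf₀.hasFDerivAt hA
  exact ⟨r₀, hr₀, ν₀, hν₀, hν₀bar, φ, hφcont, fun ν hν => ⟨(hφ ν hν).1, fun ψ _ => (hφ ν hν).2 ψ⟩⟩
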